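/- arXiv:2005.06905 — 4 statements merged into one kernel-verified Lean document; each statement's English description precedes it below -/
import Mathlib

section
/- As t ↑ T, √λ_t · ⟨f_t⊗₁f_t, f_t⟩ converges to 3/(4(2α−1)); equivalently, ⟨f_t⊗₁f_t, f_t⟩ = 3/(4(2α−1)√λ_t) + o(1/√λ_t). -/
open MeasureTheory Real Filter Topology

/-- `λ_t := |log(T−t)|/(2α−1)`. -/
noncomputable def lam (T α t : ℝ) : ℝ := |Real.log (T - t)| / (2 * α - 1)

/-- The kernel `f_t`. -/
noncomputable def fker (T α t : ℝ) (u v : ℝ) : ℝ :=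
  if u ∈ Set.Icc (0:ℝ) t ∧ v ∈ Set.Icc (0:ℝ) t then
    (1 / (2 * Real.sqrt (lam T α t))) * (T - max u v) ^ (α - 1) * (T - min u v) ^ (-α)
  else 0

/-- The kernel `g_t`. -/
noncomputable def gker (T α t : ℝ) (u v : ℝ) : ℝ :=
  if u ∈ Set.Icc (0:ℝ) t ∧ v ∈ Set.Icc (0:ℝ) t then
    (T - u) ^ (-α) * (T - v) ^ (-α) *
      ((T - max u v) ^ (2 * α - 1) - (T - t) ^ (2 * α - 1)) / |Real.log (T - t)|
  else 0

/-- `⟨p,q⟩ := ∫_{[0,T]²} p(u,v) q(u,v) du dv`. -/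
noncomputable def ip (T : ℝ) (p q : ℝ → ℝ → ℝ) : ℝ :=
  ∫ u in Set.Icc (0:ℝ) T, ∫ v in Set.Icc (0:ℝ) T, p u v * q u v

/-- `‖p‖² := ⟨p,p⟩`. -/
noncomputable def normSq (T : ℝ) (p : ℝ → ℝ → ℝ) : ℝ := ip T p p

/-- The contraction `(p ⊗₁ q)(x,y) := ∫₀^T p(x,u) q(y,u) du`. -/
noncomputable def contr (T : ℝ) (p q : ℝ → ℝ → ℝ) : ℝ → ℝ → ℝ :=
  fun x y => ∫ u in Set.Icc (0:ℝ) T, p x u * q y u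

/-- `b_t := (1/λ_t)·∫₀ᵗ ∫₀ˢ (T−s)^{2α−2}(T−u)^{−2α} du ds`. -/
noncomputable def bfun (T α t : ℝ) : ℝ :=
  (1 / lam T α t) *
    ∫ s in (0:ℝ)..t, ∫ u in (0:ℝ)..s, (T - s) ^ (2 * α - 2) * (T - u) ^ (-(2 * α))

/-- `A_{t,1}`. -/
noncomputable def A1 (T α t : ℝ) : ℝ :=
  (1 / (lam T α t) ^ 2) *
    ∫ x4 in (0:ℝ)..t, ∫ x3 in (0:ℝ)..x4, ∫ x2 in (0:ℝ)..x3, ∫ x1 in (0:ℝ)..x2,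
      (T - x4) ^ (2 * α - 2) * (T - x3) ^ (-1 : ℝ) * (T - x2) ^ (-1 : ℝ) *
        (T - x1) ^ (-(2 * α))

/-- `A_{t,2}`. -/
noncomputable def A2 (T α t : ℝ) : ℝ :=
  (1 / (2 * (lam T α t) ^ 2)) *
    ∫ x4 in (0:ℝ)..t, ∫ x2 in (0:ℝ)..x4, ∫ x3 in (0:ℝ)..x2, ∫ x1 in (0:ℝ)..x3,
      (T - x4) ^ (2 * α - 2) * (T - x2) ^ (2 * α - 2) * (T - x3) ^ (-(2 * α)) *
        (T - x1) ^ (-(2 * α))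

open Set in
/-- A version of the fundamental theorem of calculus on an interval to the left of `T`, for a
function which agrees there with a continuous derivative. -/
theorem integral_eq_sub_of_eqOn_deriv {T a b : ℝ} {F f g : ℝ → ℝ} (hab : a ≤ b) (hb : b < T)
    (hF : ∀ x < T, HasDerivAt F (f x) x) (hf : ContinuousOn f (Iio T))
    (hg : ∀ x ∈ Icc a b, g x = f x) :
    IntervalIntegrable g volume a b ∧ ∫ x in a..b, g x = F b - F a := by
  have hsub : uIcc a b ⊆ Iio T := by
    rw [uIcc_of_le hab]
    exact fun x hx => lt_of_le_of_lt hx.2 hb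
  have hint : IntervalIntegrable f volume a b := (hf.mono hsub).intervalIntegrable
  have heq : EqOn g f (uIcc a b) := by rwa [uIcc_of_le hab]
  refine ⟨hint.congr_uIoo (heq.symm.mono uIoo_subset_uIcc_self), ?_⟩
  rw [intervalIntegral.integral_congr heq]
  exact intervalIntegral.integral_eq_sub_of_hasDerivAt (fun x hx => hF x (hsub hx)) hint

theorem fker_symm (T α t u v : ℝ) : fker T α t u v = fker T α t v u := by
  simp only [fker, max_comm u v, min_comm u v, and_comm]

theorem contr_symm (T : ℝ) (p : ℝ → ℝ → ℝ) (x y : ℝ) : contr T p p x y = contr T p p y x := by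
  simp only [contr, mul_comm]

section LogPower

variable {T : ℝ}

theorem hasDerivAt_log_const_sub {x : ℝ} (hx : x < T) :
    HasDerivAt (fun x => Real.log (T - x)) (-(1 / (T - x))) x := by
  have h := ((hasDerivAt_id x).const_sub T).log (sub_pos.2 hx).ne'
  simpa [neg_div] using h

theorem hasDerivAt_const_sub_rpow (β : ℝ) {x : ℝ} (hx : x < T) :
    HasDerivAt (fun x => (T - x) ^ β) (-(β * (T - x) ^ β / (T - x))) x := by
  have hx' := sub_pos.2 hx
  have h := ((hasDerivAt_id x).const_sub T).rpow_const (p := β) (Or.inl hx'.ne')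
  refine h.congr_deriv ?_
  rw [id, Real.rpow_sub_one hx'.ne']
  ring

theorem hasDerivAt_const_sub_rpow_inv (β : ℝ) {x : ℝ} (hx : x < T) :
    HasDerivAt (fun x => ((T - x) ^ β)⁻¹) (β * ((T - x) ^ β)⁻¹ / (T - x)) x := by
  have hP := Real.rpow_pos_of_pos (sub_pos.2 hx) β
  have hx' := sub_pos.2 hx
  refine HasDerivAt.congr_deriv ((hasDerivAt_const_sub_rpow β hx).inv hP.ne') ?_
  field_simp

theorem continuousOn_log_const_sub : ContinuousOn (fun x => Real.log (T - x)) (Set.Iio T) :=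
  fun _ hx => (hasDerivAt_log_const_sub hx).continuousAt.continuousWithinAt

theorem continuousOn_const_sub_rpow (β : ℝ) : ContinuousOn (fun x => (T - x) ^ β) (Set.Iio T) :=
  fun _ hx => (hasDerivAt_const_sub_rpow β hx).continuousAt.continuousWithinAt

theorem continuousOn_const_sub_rpow_inv (β : ℝ) :
    ContinuousOn (fun x => ((T - x) ^ β)⁻¹) (Set.Iio T) :=
  fun _ hx => (hasDerivAt_const_sub_rpow_inv β hx).continuousAt.continuousWithinAt

theorem continuousOn_const_sub_inv : ContinuousOn (fun x => (T - x)⁻¹) (Set.Iio T) :=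
  (continuousOn_const.sub continuousOn_id).inv₀ fun _ hx => (sub_pos.2 hx).ne'

end LogPower

/-- The product of the kernel over the three sides of an ordered triangle. -/
theorem fker_triangle {T α t a b c : ℝ} (ha : 0 ≤ a) (hab : a ≤ b) (hbc : b ≤ c) (hct : c ≤ t)
    (htT : t < T) :
    fker T α t a b * fker T α t b c * fker T α t a c =
      (1 / (2 * Real.sqrt (lam T α t))) ^ 3 *
        ((T - c) ^ (2 * α - 1) * (T - c)⁻¹ * (T - b)⁻¹ *
          (((T - a) ^ (2 * α - 1))⁻¹ * (T - a)⁻¹)) := by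
  have hA : 0 < T - a := by linarith
  have hB : 0 < T - b := by linarith
  have hC : 0 < T - c := by linarith
  have h1 : a ∈ Set.Icc 0 t := ⟨ha, by linarith⟩
  have h2 : b ∈ Set.Icc 0 t := ⟨by linarith, by linarith⟩
  have h3 : c ∈ Set.Icc 0 t := ⟨by linarith, by linarith⟩
  have hsq : ∀ s : ℝ, 0 < s → s ^ (2 * α - 1) = s ^ α * s ^ α / s := fun s hs => by
    rw [Real.rpow_sub_one hs.ne', two_mul, Real.rpow_add hs]
  have hA' := Real.rpow_pos_of_pos hA α
  have hB' := Real.rpow_pos_of_pos hB α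
  have hC' := Real.rpow_pos_of_pos hC α
  simp only [fker, h1, h2, h3, and_self, if_true, max_eq_right hab, max_eq_right hbc,
    max_eq_right (hab.trans hbc), min_eq_left hab, min_eq_left hbc, min_eq_left (hab.trans hbc),
    hsq _ hA, hsq _ hC, Real.rpow_sub_one hB.ne', Real.rpow_sub_one hC.ne',
    Real.rpow_neg hA.le, Real.rpow_neg hB.le]
  generalize 1 / (2 * Real.sqrt (lam T α t)) = C
  field_simp

/-- The integrand of `⟨f_t ⊗₁ f_t, f_t⟩` above the diagonal. -/
theorem contr_fker_mul_fker {T α t x y : ℝ} (hα : 1 / 2 < α) (hx : 0 ≤ x) (hxy : x ≤ y)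
    (hyt : y ≤ t) (htT : t < T) :
    contr T (fker T α t) (fker T α t) x y * fker T α t x y =
      (1 / (2 * Real.sqrt (lam T α t))) ^ 3 * ((T - x)⁻¹ * (T - y)⁻¹ *
        ((T - y) ^ (2 * α - 1) * (((T - x) ^ (2 * α - 1))⁻¹ - (T ^ (2 * α - 1))⁻¹) / (2 * α - 1) +
          (T - y) ^ (2 * α - 1) * ((T - x) ^ (2 * α - 1))⁻¹ *
            (Real.log (T - x) - Real.log (T - y)) +
          ((T - y) ^ (2 * α - 1) - (T - t) ^ (2 * α - 1)) * ((T - x) ^ (2 * α - 1))⁻¹ /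
            (2 * α - 1))) := by
  have hβ : 0 < 2 * α - 1 := by linarith
  set C := 1 / (2 * Real.sqrt (lam T α t))
  set β := 2 * α - 1
  have hinv := continuousOn_const_sub_inv (T := T)
  have hP := continuousOn_const_sub_rpow (T := T) β
  have hPi := continuousOn_const_sub_rpow_inv (T := T) β
  have h0t : 0 ≤ t := by linarith
  have hcontr : contr T (fker T α t) (fker T α t) x y * fker T α t x y =
      ∫ u in (0:ℝ)..t, fker T α t x u * fker T α t y u * fker T α t x y := by
    rw [intervalIntegral.integral_mul_const, intervalIntegral.integral_of_le h0t,
      ← integral_Icc_eq_integral_Ioc, contr,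
      setIntegral_eq_of_subset_of_forall_sdiff_eq_zero measurableSet_Icc
        (Set.Icc_subset_Icc_right htT.le)]
    intro u hu
    simp [fker, hu.2]
  obtain ⟨i1, e1⟩ := integral_eq_sub_of_eqOn_deriv (T := T)
    (g := fun u => fker T α t x u * fker T α t y u * fker T α t x y)
    (f := fun u => C ^ 3 * ((T - y) ^ β * (T - y)⁻¹ * (T - x)⁻¹ * (((T - u) ^ β)⁻¹ * (T - u)⁻¹)))
    (F := fun u => C ^ 3 * ((T - y) ^ β * (T - y)⁻¹ * (T - x)⁻¹ * (((T - u) ^ β)⁻¹ / β)))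
    hx (by linarith)
    (fun u hu => by
      refine HasDerivAt.congr_deriv ((((hasDerivAt_const_sub_rpow_inv β hu).div_const β).const_mul _).const_mul _) ?_
      field_simp)
    (continuousOn_const.mul (continuousOn_const.mul (hPi.mul hinv)))
    (fun u hu => by
      rw [← fker_triangle hu.1 hu.2 hxy hyt htT, fker_symm T α t x u, fker_symm T α t y u]
      ring)
  obtain ⟨i2, e2⟩ := integral_eq_sub_of_eqOn_deriv (T := T)
    (g := fun u => fker T α t x u * fker T α t y u * fker T α t x y)
    (f := fun u => C ^ 3 * ((T - y) ^ β * (T - y)⁻¹ * (T - u)⁻¹ * (((T - x) ^ β)⁻¹ * (T - x)⁻¹)))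
    (F := fun u => C ^ 3 * ((T - y) ^ β * (T - y)⁻¹ * (-Real.log (T - u)) *
      (((T - x) ^ β)⁻¹ * (T - x)⁻¹)))
    hxy (by linarith)
    (fun u hu => by
      refine HasDerivAt.congr_deriv ((((hasDerivAt_log_const_sub hu).neg.const_mul _).mul_const _).const_mul _) ?_
      simp)
    (continuousOn_const.mul ((continuousOn_const.mul hinv).mul continuousOn_const))
    (fun u hu => by
      rw [← fker_triangle hx hu.1 hu.2 hyt htT, fker_symm T α t y u])
  obtain ⟨i3, e3⟩ := integral_eq_sub_of_eqOn_deriv (T := T)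
    (g := fun u => fker T α t x u * fker T α t y u * fker T α t x y)
    (f := fun u => C ^ 3 * ((T - u) ^ β * (T - u)⁻¹ * (T - y)⁻¹ * (((T - x) ^ β)⁻¹ * (T - x)⁻¹)))
    (F := fun u => C ^ 3 * (-((T - u) ^ β / β) * (T - y)⁻¹ * (((T - x) ^ β)⁻¹ * (T - x)⁻¹)))
    hyt htT
    (fun u hu => by
      refine HasDerivAt.congr_deriv (((((hasDerivAt_const_sub_rpow β hu).div_const β).neg.mul_const _).mul_const
        _).const_mul _) ?_
      field_simp)
    (continuousOn_const.mul (((hP.mul hinv).mul continuousOn_const).mul continuousOn_const))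
    (fun u hu => by
      rw [← fker_triangle hx hxy hu.1 hu.2 htT]
      ring)
  rw [hcontr, ← intervalIntegral.integral_add_adjacent_intervals (i1.trans i2) i3,
    ← intervalIntegral.integral_add_adjacent_intervals i1 i2, e1, e2, e3]
  simp only [sub_zero]
  ring

/-- The inner integral of `⟨f_t ⊗₁ f_t, f_t⟩`. -/
theorem integral_contr_fker_mul_fker {T α t y : ℝ} (hα : 1 / 2 < α) (hy : 0 ≤ y)
    (hyt : y ≤ t) (htT : t < T) :
    ∫ v in Set.Icc (0:ℝ) T, contr T (fker T α t) (fker T α t) y v * fker T α t y v =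
      (1 / (2 * Real.sqrt (lam T α t))) ^ 3 * ((T - y)⁻¹ *
        (6 / (2 * α - 1) ^ 2 -
          4 * (T - y) ^ (2 * α - 1) * (T ^ (2 * α - 1))⁻¹ / (2 * α - 1) ^ 2 -
          2 * (T - y) ^ (2 * α - 1) * (T ^ (2 * α - 1))⁻¹ *
            (Real.log T - Real.log (T - y)) / (2 * α - 1) -
          4 * (T - t) ^ (2 * α - 1) * ((T - y) ^ (2 * α - 1))⁻¹ / (2 * α - 1) ^ 2 +
          2 * (T - t) ^ (2 * α - 1) * (T ^ (2 * α - 1))⁻¹ / (2 * α - 1) ^ 2 -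
          2 * (T - t) ^ (2 * α - 1) * ((T - y) ^ (2 * α - 1))⁻¹ *
            (Real.log (T - y) - Real.log (T - t)) / (2 * α - 1))) := by
  have hβ : 0 < 2 * α - 1 := by linarith
  have hcm := @contr_fker_mul_fker T α t
  set C := 1 / (2 * Real.sqrt (lam T α t))
  set β := 2 * α - 1
  have hinv := continuousOn_const_sub_inv (T := T)
  have hP := continuousOn_const_sub_rpow (T := T) β
  have hPi := continuousOn_const_sub_rpow_inv (T := T) β
  have hl := continuousOn_log_const_sub (T := T)
  have h0t : 0 ≤ t := by linarith
  have hip : ∫ v in Set.Icc (0:ℝ) T, contr T (fker T α t) (fker T α t) y v * fker T α t y v =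
      ∫ v in (0:ℝ)..t, contr T (fker T α t) (fker T α t) y v * fker T α t y v := by
    rw [intervalIntegral.integral_of_le h0t, ← integral_Icc_eq_integral_Ioc,
      setIntegral_eq_of_subset_of_forall_sdiff_eq_zero measurableSet_Icc
        (Set.Icc_subset_Icc_right htT.le)]
    intro u hu
    simp [fker, hu.2]
  obtain ⟨i1, e1⟩ := integral_eq_sub_of_eqOn_deriv (T := T)
    (g := fun v => contr T (fker T α t) (fker T α t) y v * fker T α t y v)
    (f := fun x => C ^ 3 * ((T - x)⁻¹ * (T - y)⁻¹ *
        ((T - y) ^ β * (((T - x) ^ β)⁻¹ - (T ^ β)⁻¹) / β +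
          (T - y) ^ β * ((T - x) ^ β)⁻¹ * (Real.log (T - x) - Real.log (T - y)) +
          ((T - y) ^ β - (T - t) ^ β) * ((T - x) ^ β)⁻¹ / β)))
    (F := fun x => C ^ 3 * ((T - y)⁻¹ *
        ((T - y) ^ β * (((T - x) ^ β)⁻¹ / β + (T ^ β)⁻¹ * Real.log (T - x)) / β +
          (T - y) ^ β * (((T - x) ^ β)⁻¹ * (Real.log (T - x) - Real.log (T - y)) / β +
            ((T - x) ^ β)⁻¹ / β ^ 2) +
          ((T - y) ^ β - (T - t) ^ β) * (((T - x) ^ β)⁻¹ / β) / β)))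
    hy (by linarith)
    (fun u hu => by
      have hi := hasDerivAt_const_sub_rpow_inv β hu
      have hL := hasDerivAt_log_const_sub hu
      have h1 := (((hi.div_const β).add (hL.const_mul (T ^ β)⁻¹)).const_mul
        ((T - y) ^ β)).div_const β
      have h2 := (((hi.mul (hL.sub_const (Real.log (T - y)))).div_const β).add
        (hi.div_const (β ^ 2))).const_mul ((T - y) ^ β)
      have h3 := ((hi.div_const β).const_mul ((T - y) ^ β - (T - t) ^ β)).div_const β
      refine HasDerivAt.congr_deriv ((((h1.add h2).add h3).const_mul (T - y)⁻¹).const_mul (C ^ 3)) ?_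
      field_simp
      ring)
    (by fun_prop)
    (fun u hu => by
      rw [contr_symm, fker_symm, hcm hα hu.1 hu.2 hyt htT])
  obtain ⟨i2, e2⟩ := integral_eq_sub_of_eqOn_deriv (T := T)
    (g := fun v => contr T (fker T α t) (fker T α t) y v * fker T α t y v)
    (f := fun v => C ^ 3 * ((T - y)⁻¹ * (T - v)⁻¹ *
        ((T - v) ^ β * (((T - y) ^ β)⁻¹ - (T ^ β)⁻¹) / β +
          (T - v) ^ β * ((T - y) ^ β)⁻¹ * (Real.log (T - y) - Real.log (T - v)) +
          ((T - v) ^ β - (T - t) ^ β) * ((T - y) ^ β)⁻¹ / β)))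
    (F := fun v => C ^ 3 * ((T - y)⁻¹ *
        (-((T - v) ^ β / β) * (((T - y) ^ β)⁻¹ - (T ^ β)⁻¹) / β +
          ((T - v) ^ β * (Real.log (T - v) - Real.log (T - y)) / β - (T - v) ^ β / β ^ 2) *
            ((T - y) ^ β)⁻¹ +
          ((T - t) ^ β * Real.log (T - v) - (T - v) ^ β / β) * ((T - y) ^ β)⁻¹ / β)))
    hyt htT
    (fun u hu => by
      have hi := hasDerivAt_const_sub_rpow β hu
      have hL := hasDerivAt_log_const_sub hu
      have h1 := (((hi.div_const β).neg).mul_const (((T - y) ^ β)⁻¹ - (T ^ β)⁻¹)).div_const β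
      have h2 := (((hi.mul (hL.sub_const (Real.log (T - y)))).div_const β).sub
        (hi.div_const (β ^ 2))).mul_const ((T - y) ^ β)⁻¹
      have h3 := (((hL.const_mul ((T - t) ^ β)).sub (hi.div_const β)).mul_const
        ((T - y) ^ β)⁻¹).div_const β
      refine HasDerivAt.congr_deriv ((((h1.add h2).add h3).const_mul (T - y)⁻¹).const_mul (C ^ 3)) ?_
      field_simp
      ring)
    (by fun_prop)
    (fun u hu => by
      rw [hcm hα hy hu.1 hu.2 htT])
  have hy' : 0 < T - y := by linarith
  have hPy := Real.rpow_pos_of_pos hy' β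
  have hT' := Real.rpow_pos_of_pos (show 0 < T by linarith) β
  rw [hip, ← intervalIntegral.integral_add_adjacent_intervals i1 i2, e1, e2]
  simp only [sub_zero]
  field_simp
  ring

theorem ip_contr_fker {T α t : ℝ} (hα : 1 / 2 < α) (ht : 0 ≤ t) (htT : t < T) :
    ip T (contr T (fker T α t) (fker T α t)) (fker T α t) =
      (1 / (2 * Real.sqrt (lam T α t))) ^ 3 *
        (6 * (Real.log T - Real.log (T - t)) / (2 * α - 1) ^ 2 +
          6 * ((T - t) ^ (2 * α - 1) / T ^ (2 * α - 1)) *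
            (Real.log T - Real.log (T - t)) / (2 * α - 1) ^ 2 +
          12 * ((T - t) ^ (2 * α - 1) / T ^ (2 * α - 1) - 1) / (2 * α - 1) ^ 3) := by
  have hβ : 0 < 2 * α - 1 := by linarith
  have hcm := @integral_contr_fker_mul_fker T α t
  set C := 1 / (2 * Real.sqrt (lam T α t))
  set β := 2 * α - 1
  have hinv := continuousOn_const_sub_inv (T := T)
  have hP := continuousOn_const_sub_rpow (T := T) β
  have hPi := continuousOn_const_sub_rpow_inv (T := T) β
  have hl := continuousOn_log_const_sub (T := T)
  have hip : ip T (contr T (fker T α t) (fker T α t)) (fker T α t) =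
      ∫ y in (0:ℝ)..t, ∫ v in Set.Icc (0:ℝ) T,
        contr T (fker T α t) (fker T α t) y v * fker T α t y v := by
    rw [intervalIntegral.integral_of_le ht, ← integral_Icc_eq_integral_Ioc, ip,
      setIntegral_eq_of_subset_of_forall_sdiff_eq_zero measurableSet_Icc
        (Set.Icc_subset_Icc_right htT.le)]
    intro u hu
    simp [fker, hu.2]
  obtain ⟨-, e⟩ := integral_eq_sub_of_eqOn_deriv (T := T)
    (g := fun y => ∫ v in Set.Icc (0:ℝ) T,
      contr T (fker T α t) (fker T α t) y v * fker T α t y v)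
    (f := fun y => C ^ 3 * ((T - y)⁻¹ *
        (6 / β ^ 2 - 4 * (T - y) ^ β * (T ^ β)⁻¹ / β ^ 2 -
          2 * (T - y) ^ β * (T ^ β)⁻¹ * (Real.log T - Real.log (T - y)) / β -
          4 * (T - t) ^ β * ((T - y) ^ β)⁻¹ / β ^ 2 + 2 * (T - t) ^ β * (T ^ β)⁻¹ / β ^ 2 -
          2 * (T - t) ^ β * ((T - y) ^ β)⁻¹ * (Real.log (T - y) - Real.log (T - t)) / β)))
    (F := fun y => C ^ 3 *
        ((-6 / β ^ 2 - 2 * (T - t) ^ β * (T ^ β)⁻¹ / β ^ 2) * Real.log (T - y) +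
          6 * (T ^ β)⁻¹ / β ^ 3 * (T - y) ^ β +
          2 * (T ^ β)⁻¹ / β ^ 2 * ((T - y) ^ β * (Real.log T - Real.log (T - y))) -
          6 * (T - t) ^ β / β ^ 3 * ((T - y) ^ β)⁻¹ -
          2 * (T - t) ^ β / β ^ 2 * (((T - y) ^ β)⁻¹ * (Real.log (T - y) - Real.log (T - t)))))
    ht htT
    (fun u hu => by
      have hp := hasDerivAt_const_sub_rpow β hu
      have hi := hasDerivAt_const_sub_rpow_inv β hu
      have hL := hasDerivAt_log_const_sub hu
      refine HasDerivAt.congr_deriv ((((((hL.const_mul (-6 / β ^ 2 - 2 * (T - t) ^ β * (T ^ β)⁻¹ / β ^ 2)).add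
        (hp.const_mul (6 * (T ^ β)⁻¹ / β ^ 3))).add
        ((hp.mul (hL.const_sub (Real.log T))).const_mul (2 * (T ^ β)⁻¹ / β ^ 2))).sub
        (hi.const_mul (6 * (T - t) ^ β / β ^ 3))).sub
        ((hi.mul (hL.sub_const (Real.log (T - t)))).const_mul
          (2 * (T - t) ^ β / β ^ 2))).const_mul (C ^ 3)) ?_
      field_simp
      ring)
    (by fun_prop)
    (fun u hu => hcm hα hu.1 hu.2 htT)
  have ht' : 0 < T - t := by linarith
  have hPt := Real.rpow_pos_of_pos ht' β
  have hT' := Real.rpow_pos_of_pos (show 0 < T by linarith) β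
  rw [hip, e]
  simp only [sub_zero]
  field_simp
  ring

theorem tendsto_const_sub_nhdsLT (T : ℝ) : Tendsto (fun t => T - t) (𝓝[<] T) (𝓝[>] 0) := by
  refine tendsto_nhdsWithin_iff.2 ⟨?_, ?_⟩
  · have h : Tendsto (fun t => T - t) (𝓝 T) (𝓝 (T - T)) :=
      (continuous_const.sub continuous_id).tendsto T
    rw [sub_self] at h
    exact h.mono_left nhdsWithin_le_nhds
  · filter_upwards [self_mem_nhdsWithin] with t ht
    exact sub_pos.2 (Set.mem_Iio.1 ht)

theorem stmt_5 (T α : ℝ) (hT : 0 < T) (hα : 1 / 2 < α) :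
    Tendsto (fun t => Real.sqrt (lam T α t) *
        ip T (contr T (fker T α t) (fker T α t)) (fker T α t))
      (𝓝[<] T) (𝓝 (3 / (4 * (2 * α - 1)))) := by
  have hβ : 0 < 2 * α - 1 := by linarith
  have hTβ := Real.rpow_pos_of_pos hT (2 * α - 1)
  have hsub := tendsto_const_sub_nhdsLT T
  have hlog : Tendsto (fun t => (Real.log (T - t))⁻¹) (𝓝[<] T) (𝓝 0) :=
    tendsto_inv_atBot_zero.comp (Real.tendsto_log_nhdsGT_zero.comp hsub)
  have hpow : Tendsto (fun t => (T - t) ^ (2 * α - 1)) (𝓝[<] T) (𝓝 0) := by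
    have h := (Real.continuousAt_rpow_const 0 (2 * α - 1) (Or.inr hβ.le)).tendsto
    rw [Real.zero_rpow hβ.ne'] at h
    exact (h.mono_left nhdsWithin_le_nhds).comp hsub
  have hlim : Tendsto (fun t => (2 * α - 1) / 8 *
      (6 * (1 - Real.log T * (Real.log (T - t))⁻¹) / (2 * α - 1) ^ 2 +
        6 * ((T - t) ^ (2 * α - 1) / T ^ (2 * α - 1)) *
          (1 - Real.log T * (Real.log (T - t))⁻¹) / (2 * α - 1) ^ 2 -
        12 * ((T - t) ^ (2 * α - 1) / T ^ (2 * α - 1) - 1) / (2 * α - 1) ^ 3 *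
          (Real.log (T - t))⁻¹)) (𝓝[<] T) (𝓝 ((2 * α - 1) / 8 *
      (6 * (1 - Real.log T * 0) / (2 * α - 1) ^ 2 +
        6 * (0 / T ^ (2 * α - 1)) * (1 - Real.log T * 0) / (2 * α - 1) ^ 2 -
        12 * (0 / T ^ (2 * α - 1) - 1) / (2 * α - 1) ^ 3 * 0))) := by
    have hD := (hlog.const_mul (Real.log T)).const_sub 1
    have hr := hpow.div_const (T ^ (2 * α - 1))
    exact (((((hD.const_mul 6).div_const _).add (((hr.const_mul 6).mul hD).div_const _)).sub
      ((((hr.sub_const 1).const_mul 12).div_const _).mul hlog))).const_mul _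
  have hval : (2 * α - 1) / 8 * (6 * (1 - Real.log T * 0) / (2 * α - 1) ^ 2 +
      6 * (0 / T ^ (2 * α - 1)) * (1 - Real.log T * 0) / (2 * α - 1) ^ 2 -
      12 * (0 / T ^ (2 * α - 1) - 1) / (2 * α - 1) ^ 3 * 0) = 3 / (4 * (2 * α - 1)) := by
    field_simp
    ring
  rw [hval] at hlim
  refine hlim.congr' ?_
  filter_upwards [self_mem_nhdsWithin, nhdsWithin_le_nhds (Ioi_mem_nhds hT),
    nhdsWithin_le_nhds (Ioi_mem_nhds (sub_one_lt T))] with t htT ht0 ht1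
  have htT' : t < T := htT
  have ht0' : 0 < t := ht0
  have ht1' : T - 1 < t := ht1
  have hneg : Real.log (T - t) < 0 := Real.log_neg (by linarith) (by linarith)
  have hlam : lam T α t = -Real.log (T - t) / (2 * α - 1) := by rw [lam, abs_of_neg hneg]
  have hlampos : 0 < lam T α t := hlam ▸ div_pos (neg_pos.2 hneg) hβ
  have hsqrt : Real.sqrt (lam T α t) * (1 / (2 * Real.sqrt (lam T α t))) ^ 3 =
      -((2 * α - 1) / 8 * (Real.log (T - t))⁻¹) := by
    have hs := Real.sqrt_pos.2 hlampos
    calc Real.sqrt (lam T α t) * (1 / (2 * Real.sqrt (lam T α t))) ^ 3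
        = 1 / (8 * Real.sqrt (lam T α t) ^ 2) := by field_simp; norm_num
      _ = -((2 * α - 1) / 8 * (Real.log (T - t))⁻¹) := by
        rw [Real.sq_sqrt hlampos.le, hlam]
        have := hneg.ne
        field_simp
  rw [ip_contr_fker hα ht0'.le htT', ← mul_assoc, hsqrt]
  have := hneg.ne
  field_simp
  ring
end

section
/- As t ↑ T, λ_t · ‖f_t ⊗₁ f_t‖² converges to 5/(4(2α−1)²); equivalently, ‖f_t ⊗₁ f_t‖² = 5/(4(2α−1)²λ_t) + o(1/λ_t). -/
open MeasureTheory Real Filter Topology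

section ExponentialKernel

variable {γ : ℝ}

/-- The integral over the line of a product of two shifted two-sided exponentials. -/
lemma integral_exp_abs_mul_exp_abs_of_nonneg (hγ : 0 < γ) {s : ℝ} (hs : 0 ≤ s) :
    Integrable (fun c => rexp (-γ * |c|) * rexp (-γ * |s - c|)) ∧
      ∫ c, rexp (-γ * |c|) * rexp (-γ * |s - c|) = rexp (-γ * s) * (s + 1 / γ) := by
  set F : ℝ → ℝ := fun c => rexp (-γ * |c|) * rexp (-γ * |s - c|) with hF
  have hFc : Continuous F := by fun_prop
  have e1 : Set.EqOn F (fun c => rexp (-γ * s) * rexp (2 * γ * c)) (Set.Iic 0) := by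
    intro c hc
    have hc' : c ≤ 0 := hc
    simp only [hF, abs_of_nonpos hc', abs_of_nonneg (by linarith : 0 ≤ s - c), ← exp_add]
    ring_nf
  have e2 : Set.EqOn F (fun _ => rexp (-γ * s)) (Set.Ioc 0 s) := by
    intro c hc
    simp only [hF, abs_of_pos hc.1, abs_of_nonneg (by linarith [hc.2] : 0 ≤ s - c), ← exp_add]
    ring_nf
  have e3 : Set.EqOn F (fun c => rexp (γ * s) * rexp (-(2 * γ) * c)) (Set.Ioi s) := by
    intro c hc
    have hc' : s < c := hc
    simp only [hF, abs_of_nonneg (hs.trans hc'.le), abs_of_nonpos (by linarith : s - c ≤ 0),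
      ← exp_add]
    ring_nf
  have i1 : IntegrableOn F (Set.Iic 0) :=
    IntegrableOn.congr_fun ((integrableOn_exp_mul_Iic (by positivity) 0).const_mul _) e1.symm
      measurableSet_Iic
  have i2 : IntegrableOn F (Set.Ioc 0 s) := hFc.integrableOn_Ioc
  have i3 : IntegrableOn F (Set.Ioi s) :=
    IntegrableOn.congr_fun ((integrableOn_exp_mul_Ioi (by linarith) s).const_mul _) e3.symm
      measurableSet_Ioi
  have i23 : IntegrableOn F (Set.Ioi 0) := by
    rw [← Set.Ioc_union_Ioi_eq_Ioi hs]; exact i2.union i3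
  refine ⟨?_, ?_⟩
  · rw [← integrableOn_univ, ← Set.Iic_union_Ioi (a := (0 : ℝ))]; exact i1.union i23
  · rw [← intervalIntegral.integral_Iic_add_Ioi i1 i23, ← Set.Ioc_union_Ioi_eq_Ioi hs,
      setIntegral_union (Set.Ioc_disjoint_Ioi le_rfl) measurableSet_Ioi i2 i3,
      setIntegral_congr_fun measurableSet_Iic e1, setIntegral_congr_fun measurableSet_Ioc e2,
      setIntegral_congr_fun measurableSet_Ioi e3, integral_const_mul, integral_const_mul,
      integral_exp_mul_Iic (by positivity), integral_exp_mul_Ioi (by linarith)]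
    have h : rexp (-γ * s) = rexp (γ * s) * rexp (-(2 * γ) * s) := by rw [← exp_add]; ring_nf
    simp only [integral_const, measureReal_restrict_apply_univ, volume_real_Ioc_of_le hs,
      mul_zero, exp_zero, sub_zero, smul_eq_mul]
    have h2 : rexp (γ * s) * (-rexp (-(2 * γ) * s) / -(2 * γ)) = rexp (-γ * s) / (2 * γ) := by
      rw [h]; field_simp
    rw [h2]
    field_simp
    ring

lemma integral_exp_abs_mul_exp_abs (hγ : 0 < γ) (s : ℝ) :
    Integrable (fun c => rexp (-γ * |c|) * rexp (-γ * |s - c|)) ∧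
      ∫ c, rexp (-γ * |c|) * rexp (-γ * |s - c|) = rexp (-γ * |s|) * (|s| + 1 / γ) := by
  rcases le_total 0 s with hs | hs
  · rw [abs_of_nonneg hs]; exact integral_exp_abs_mul_exp_abs_of_nonneg hγ hs
  · obtain ⟨h1, h2⟩ := integral_exp_abs_mul_exp_abs_of_nonneg hγ (neg_nonneg.2 hs)
    have h : (fun c => rexp (-γ * |c|) * rexp (-γ * |s - c|)) =
        fun c => (fun c => rexp (-γ * |c|) * rexp (-γ * |-s - c|)) (-c) := by
      ext c
      simp only [abs_neg, show -s - -c = -(s - c) by ring]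
    rw [abs_of_nonpos hs, h]
    exact ⟨h1.comp_neg, (integral_neg_eq_self _ volume).trans h2⟩

/-- The squared `L²` norm of the self-convolution of a two-sided exponential. -/
lemma integral_sq_exp_abs_convolution (hγ : 0 < γ) :
    Integrable (fun s => (rexp (-γ * |s|) * (|s| + 1 / γ)) ^ 2) ∧
      ∫ s, (rexp (-γ * |s|) * (|s| + 1 / γ)) ^ 2 = 5 / (2 * γ ^ 3) := by
  set f : ℝ → ℝ := fun s => (rexp (-γ * s) * (s + 1 / γ)) ^ 2 with hf
  set g : ℝ → ℝ := fun s => -(rexp (-(2 * γ * s)) *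
    (s ^ 2 / (2 * γ) + 3 * s / (2 * γ ^ 2) + 5 / (4 * γ ^ 3))) with hg
  have hd : ∀ x ∈ Set.Ici (0 : ℝ), HasDerivAt g (f x) x := by
    intro x _
    have h1 : HasDerivAt (fun s : ℝ => rexp (-(2 * γ * s)))
        (rexp (-(2 * γ * x)) * -(2 * γ * 1)) x :=
      ((hasDerivAt_id x).const_mul (2 * γ)).neg.exp
    have h2 : HasDerivAt (fun s : ℝ => s ^ 2 / (2 * γ) + 3 * s / (2 * γ ^ 2) + 5 / (4 * γ ^ 3))
        ((2 : ℕ) * x ^ (2 - 1) * 1 / (2 * γ) + 3 * 1 / (2 * γ ^ 2)) x :=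
      ((((hasDerivAt_id x).pow 2).div_const _).add
        (((hasDerivAt_id x).const_mul 3).div_const _)).add_const _
    refine (h1.mul h2).neg.congr_deriv ?_
    have h3 : rexp (-(2 * γ * x)) = rexp (-γ * x) ^ 2 := by rw [← exp_nat_mul]; push_cast; ring_nf
    simp only [hf, h3]
    field_simp
    push_cast
    ring
  have hlim : Tendsto g atTop (𝓝 0) := by
    have hm : Tendsto (fun s : ℝ => 2 * γ * s) atTop atTop :=
      tendsto_id.const_mul_atTop (by positivity)
    have h0 := (tendsto_pow_mul_exp_neg_atTop_nhds_zero 0).comp hm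
    have h1 := (tendsto_pow_mul_exp_neg_atTop_nhds_zero 1).comp hm
    have h2 := (tendsto_pow_mul_exp_neg_atTop_nhds_zero 2).comp hm
    have h := (((h2.const_mul (1 / (8 * γ ^ 3))).add (h1.const_mul (3 / (4 * γ ^ 3)))).add
      (h0.const_mul (5 / (4 * γ ^ 3)))).neg
    simp only [mul_zero, add_zero, neg_zero] at h
    refine h.congr fun s => ?_
    simp only [hg, Function.comp]
    field_simp
    ring
  have hpos : ∀ x ∈ Set.Ioi (0 : ℝ), 0 ≤ f x := fun x _ => sq_nonneg _
  have hval : ∫ s, f |s| = 5 / (2 * γ ^ 3) := by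
    rw [integral_comp_abs, integral_Ioi_of_hasDerivAt_of_nonneg' hd hpos hlim]
    simp only [hg, mul_zero, neg_zero, exp_zero]
    field_simp
    ring
  refine ⟨?_, hval⟩
  by_contra hni
  have h0 : ∫ s, f |s| = 0 := integral_undef hni
  rw [hval] at h0
  have : 0 < 5 / (2 * γ ^ 3) := by positivity
  exact this.ne' h0

end ExponentialKernel

/-- The contraction of the truncated two-sided exponential kernel with itself at `(a, a + s)`,
the variable of integration being centred at `a`. -/
noncomputable def truncConv (γ L a s : ℝ) : ℝ :=
  ∫ c, (Set.Icc 0 L).indicator 1 (a + c) * (rexp (-γ * |c|) * rexp (-γ * |s - c|))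

section TruncatedConvolution

variable {γ : ℝ}

lemma indicator_one_mem_unit (S : Set ℝ) (z : ℝ) :
    0 ≤ S.indicator (1 : ℝ → ℝ) z ∧ S.indicator (1 : ℝ → ℝ) z ≤ 1 := by
  by_cases h : z ∈ S <;> simp [h]

lemma tendsto_indicator_Icc_zero_atTop {x : ℝ} (hx : x ∈ Set.Ioo (0 : ℝ) 1) (s : ℝ) :
    Tendsto (fun L : ℝ => (Set.Icc 0 L).indicator (1 : ℝ → ℝ) (L * x + s)) atTop (𝓝 1) := by
  refine tendsto_const_nhds.congr' ?_
  have h1 : Tendsto (fun L : ℝ => L * x) atTop atTop := tendsto_id.atTop_mul_const hx.1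
  have h2 : Tendsto (fun L : ℝ => L * (1 - x)) atTop atTop :=
    tendsto_id.atTop_mul_const (by linarith [hx.2])
  filter_upwards [h1.eventually_ge_atTop (-s), h2.eventually_ge_atTop s] with L hL1 hL2
  rw [Set.indicator_of_mem]
  · rfl
  · exact ⟨by linarith, by linarith⟩

lemma measurable_truncConv (γ L : ℝ) : Measurable fun p : ℝ × ℝ => truncConv γ L p.1 p.2 := by
  have h : Measurable fun q : (ℝ × ℝ) × ℝ => (Set.Icc 0 L).indicator (1 : ℝ → ℝ) (q.1.1 + q.2) *
      (rexp (-γ * |q.2|) * rexp (-γ * |q.1.2 - q.2|)) := by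
    refine Measurable.mul ?_ (by fun_prop)
    exact (measurable_one.indicator measurableSet_Icc).comp (by fun_prop)
  exact (h.stronglyMeasurable.integral_prod_right').measurable

lemma truncConv_nonneg (γ L a s : ℝ) : 0 ≤ truncConv γ L a s :=
  integral_nonneg fun c => mul_nonneg (indicator_one_mem_unit _ _).1 (by positivity)

lemma truncConv_le (hγ : 0 < γ) (L a s : ℝ) :
    truncConv γ L a s ≤ rexp (-γ * |s|) * (|s| + 1 / γ) := by
  obtain ⟨hi, hv⟩ := integral_exp_abs_mul_exp_abs hγ s
  rw [← hv]
  refine integral_mono_of_nonneg (ae_of_all _ fun c => ?_) hi (ae_of_all _ fun c => ?_)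
  · exact mul_nonneg (indicator_one_mem_unit _ _).1 (by positivity)
  · exact mul_le_of_le_one_left (by positivity) (indicator_one_mem_unit _ _).2

lemma tendsto_truncConv (hγ : 0 < γ) {x : ℝ} (hx : x ∈ Set.Ioo (0 : ℝ) 1) (s : ℝ) :
    Tendsto (fun L => truncConv γ L (L * x) s) atTop
      (𝓝 (rexp (-γ * |s|) * (|s| + 1 / γ))) := by
  obtain ⟨hi, hv⟩ := integral_exp_abs_mul_exp_abs hγ s
  rw [← hv]
  refine tendsto_integral_filter_of_dominated_convergence _
    (Eventually.of_forall fun L => ?_) (Eventually.of_forall fun L => ae_of_all _ fun c => ?_) hi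
    (ae_of_all _ fun c => ?_)
  · refine (Measurable.mul ?_ (by fun_prop)).aestronglyMeasurable
    exact (measurable_one.indicator measurableSet_Icc).comp (by fun_prop)
  · rw [norm_of_nonneg (mul_nonneg (indicator_one_mem_unit _ _).1 (by positivity))]
    exact mul_le_of_le_one_left (by positivity) (indicator_one_mem_unit _ _).2
  · simpa using (tendsto_indicator_Icc_zero_atTop hx c).mul_const
      (rexp (-γ * |c|) * rexp (-γ * |s - c|))

/-- As `L → ∞`, the rescaled squared norm of the truncated contraction tends to that of the
full-line one. -/
lemma tendsto_integral_truncConv_sq (hγ : 0 < γ) :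
    Tendsto (fun L : ℝ => ∫ x in Set.Icc (0 : ℝ) 1, ∫ s,
        (Set.Icc 0 L).indicator 1 (L * x + s) * truncConv γ L (L * x) s ^ 2)
      atTop (𝓝 (5 / (2 * γ ^ 3))) := by
  obtain ⟨hi, hv⟩ := integral_sq_exp_abs_convolution hγ
  have hmeas (L : ℝ) : Measurable fun q : ℝ × ℝ =>
      (Set.Icc 0 L).indicator (1 : ℝ → ℝ) (L * q.1 + q.2) * truncConv γ L (L * q.1) q.2 ^ 2 := by
    refine Measurable.mul ?_ (Measurable.pow_const ?_ 2)
    · exact (measurable_one.indicator measurableSet_Icc).comp (by fun_prop)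
    · exact (measurable_truncConv γ L).comp
        (by fun_prop : Measurable fun q : ℝ × ℝ => (L * q.1, q.2))
  have hnn (L x s : ℝ) :
      0 ≤ (Set.Icc 0 L).indicator (1 : ℝ → ℝ) (L * x + s) * truncConv γ L (L * x) s ^ 2 :=
    mul_nonneg (indicator_one_mem_unit _ _).1 (sq_nonneg _)
  have hle (L x s : ℝ) :
      (Set.Icc 0 L).indicator (1 : ℝ → ℝ) (L * x + s) * truncConv γ L (L * x) s ^ 2 ≤
        (rexp (-γ * |s|) * (|s| + 1 / γ)) ^ 2 :=
    (mul_le_of_le_one_left (sq_nonneg _) (indicator_one_mem_unit _ _).2).trans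
      (pow_le_pow_left₀ (truncConv_nonneg _ _ _ _) (truncConv_le hγ _ _ _) 2)
  have hmain : Tendsto (fun L : ℝ => ∫ x in Set.Icc (0 : ℝ) 1, ∫ s,
        (Set.Icc 0 L).indicator 1 (L * x + s) * truncConv γ L (L * x) s ^ 2)
      atTop (𝓝 (∫ _ in Set.Icc (0 : ℝ) 1, 5 / (2 * γ ^ 3))) := by
    refine tendsto_integral_filter_of_dominated_convergence (fun _ => 5 / (2 * γ ^ 3))
      (Eventually.of_forall fun L => ?_) (Eventually.of_forall fun L => ae_of_all _ fun x => ?_)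
      (integrable_const _) ?_
    · exact (hmeas L).stronglyMeasurable.integral_prod_right'.aestronglyMeasurable
    · rw [norm_of_nonneg (integral_nonneg (hnn L x)), ← hv]
      exact integral_mono_of_nonneg (ae_of_all _ (hnn L x)) hi (ae_of_all _ (hle L x))
    · rw [← Measure.restrict_congr_set Ioo_ae_eq_Icc]
      filter_upwards [ae_restrict_mem measurableSet_Ioo] with x hx
      rw [← hv]
      refine tendsto_integral_filter_of_dominated_convergence _
        (Eventually.of_forall fun L => ?_)
        (Eventually.of_forall fun L => ae_of_all _ fun s => ?_) hi (ae_of_all _ fun s => ?_)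
      · exact ((hmeas L).comp measurable_prodMk_left).aestronglyMeasurable
      · rw [norm_of_nonneg (hnn L x s)]
        exact hle L x s
      · simpa using (tendsto_indicator_Icc_zero_atTop hx s).mul ((tendsto_truncConv hγ hx s).pow 2)
  simpa using hmain

/-- Centring and rescaling the squared norm of the truncated exponential contraction. -/
lemma integral_sq_exp_contraction {L : ℝ} (hL : 0 < L) :
    ∫ a in Set.Icc 0 L, ∫ b in Set.Icc 0 L,
        (∫ c in Set.Icc 0 L, rexp (-γ * |a - c|) * rexp (-γ * |b - c|)) ^ 2 =
      L * ∫ x in Set.Icc (0 : ℝ) 1, ∫ s,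
        (Set.Icc 0 L).indicator 1 (L * x + s) * truncConv γ L (L * x) s ^ 2 := by
  have hconv (a s : ℝ) : ∫ c in Set.Icc 0 L, rexp (-γ * |a - c|) * rexp (-γ * |a + s - c|) =
      truncConv γ L a s := by
    rw [← integral_indicator measurableSet_Icc, ← integral_add_left_eq_self _ a, truncConv]
    congr 1 with c
    by_cases h : a + c ∈ Set.Icc 0 L
    · rw [Set.indicator_of_mem h, Set.indicator_of_mem h, Pi.one_apply, one_mul,
        show a - (a + c) = -c by ring, abs_neg, show a + s - (a + c) = s - c by ring]
    · rw [Set.indicator_of_notMem h, Set.indicator_of_notMem h, zero_mul]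
  have hinner (a : ℝ) : ∫ b in Set.Icc 0 L,
        (∫ c in Set.Icc 0 L, rexp (-γ * |a - c|) * rexp (-γ * |b - c|)) ^ 2 =
      ∫ s, (Set.Icc 0 L).indicator 1 (a + s) * truncConv γ L a s ^ 2 := by
    rw [← integral_indicator measurableSet_Icc, ← integral_add_left_eq_self _ a]
    congr 1 with s
    by_cases h : a + s ∈ Set.Icc 0 L
    · rw [Set.indicator_of_mem h, Set.indicator_of_mem h, Pi.one_apply, one_mul, hconv]
    · rw [Set.indicator_of_notMem h, Set.indicator_of_notMem h, zero_mul]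
  simp only [hinner]
  rw [integral_Icc_eq_integral_Ioc, integral_Icc_eq_integral_Ioc,
    ← intervalIntegral.integral_of_le hL.le, ← intervalIntegral.integral_of_le zero_le_one,
    intervalIntegral.mul_integral_comp_mul_left
      (f := fun a => ∫ s, (Set.Icc 0 L).indicator 1 (a + s) * truncConv γ L a s ^ 2),
    mul_zero, mul_one]

end TruncatedConvolution

section LogarithmicCoordinate

variable {T α t : ℝ}

lemma sub_mul_exp_neg_mem_Icc_iff (hT : 0 < T) (ht : t < T) (a : ℝ) :
    T - T * rexp (-a) ∈ Set.Icc 0 t ↔ a ∈ Set.Icc 0 (log (T / (T - t))) := by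
  have hε : 0 < T - t := sub_pos.2 ht
  have h1 : 0 ≤ T - T * rexp (-a) ↔ 0 ≤ a := by
    rw [sub_nonneg, mul_le_iff_le_one_right hT, exp_le_one_iff, neg_nonpos]
  have h2 : T - T * rexp (-a) ≤ t ↔ a ≤ log (T / (T - t)) := by
    rw [le_log_iff_exp_le (by positivity), le_div_iff₀ hε, exp_neg]
    have := exp_pos a
    rw [sub_le_comm, ← div_eq_mul_inv, le_div_iff₀ this, mul_comm]
  rw [Set.mem_Icc, Set.mem_Icc, h1, h2]

/-- The substitution `u = T - T e⁻ᵃ` on `[0, t]`. -/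
lemma setIntegral_Icc_eq_logarithmic (hT : 0 < T) (ht : t < T) (F : ℝ → ℝ) :
    ∫ u in Set.Icc 0 t, F u =
      ∫ a in Set.Icc 0 (log (T / (T - t))), T * rexp (-a) * F (T - T * rexp (-a)) := by
  have himage : (fun a => T - T * rexp (-a)) '' Set.Icc 0 (log (T / (T - t))) = Set.Icc 0 t := by
    ext u
    constructor
    · rintro ⟨a, ha, rfl⟩
      exact (sub_mul_exp_neg_mem_Icc_iff hT ht a).2 ha
    · intro hu
      have hpos : 0 < T - u := by linarith [hu.2]
      have hu' : T - T * rexp (-log (T / (T - u))) = u := by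
        rw [exp_neg, exp_log (by positivity)]
        field_simp
        ring
      refine ⟨log (T / (T - u)), ?_, hu'⟩
      rw [← sub_mul_exp_neg_mem_Icc_iff hT ht, hu']
      exact hu
  rw [← himage, integral_image_eq_integral_abs_deriv_smul (f' := fun a => T * rexp (-a))
    measurableSet_Icc]
  · refine setIntegral_congr_fun measurableSet_Icc fun a _ => ?_
    simp only [smul_eq_mul]
    rw [abs_of_pos (by positivity)]
  · intro a _
    have h : HasDerivAt (fun a => T - T * rexp (-a)) (-(T * (rexp (-a) * -1))) a :=
      ((hasDerivAt_neg a).exp.const_mul T).const_sub T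
    exact (h.congr_deriv (by ring)).hasDerivWithinAt
  · intro a _ b _ hab
    have h : rexp (-a) = rexp (-b) := mul_left_cancel₀ hT.ne' (sub_right_injective hab)
    exact neg_injective (exp_injective h)

lemma fker_comm (u v : ℝ) : fker T α t u v = fker T α t v u := by
  simp only [fker, max_comm u v, min_comm u v, and_comm]

/-- In the logarithmic coordinate `f_t` is a two-sided exponential kernel. -/
lemma fker_logarithmic (hT : 0 < T) (ht : t < T) {a b : ℝ}
    (ha : a ∈ Set.Icc 0 (log (T / (T - t)))) (hb : b ∈ Set.Icc 0 (log (T / (T - t)))) :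
    fker T α t (T - T * rexp (-a)) (T - T * rexp (-b)) =
      1 / (2 * √(lam T α t)) * (T⁻¹ * (rexp (a / 2) * rexp (b / 2))) *
        rexp (-(α - 1 / 2) * |a - b|) := by
  wlog hab : a ≤ b generalizing a b
  · rw [fker_comm, this hb ha (le_of_not_ge hab), abs_sub_comm, mul_comm (rexp (b / 2))]
  have hle : T - T * rexp (-a) ≤ T - T * rexp (-b) := by gcongr
  rw [fker, if_pos ⟨(sub_mul_exp_neg_mem_Icc_iff hT ht a).2 ha,
    (sub_mul_exp_neg_mem_Icc_iff hT ht b).2 hb⟩, max_eq_right hle, min_eq_left hle,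
    abs_of_nonpos (sub_nonpos.2 hab), sub_sub_cancel, sub_sub_cancel,
    mul_rpow hT.le (exp_pos _).le, mul_rpow hT.le (exp_pos _).le, ← exp_mul, ← exp_mul]
  have h1 : T ^ (α - 1) * T ^ (-α) = T⁻¹ := by
    rw [← rpow_add hT, ← rpow_neg_one]
    ring_nf
  have h2 : rexp (-b * (α - 1)) * rexp (-a * -α) =
      rexp (a / 2) * rexp (b / 2) * rexp (-(α - 1 / 2) * -(a - b)) := by
    rw [← exp_add, ← exp_add, ← exp_add]
    ring_nf
  linear_combination (1 / (2 * √(lam T α t))) * (rexp (-b * (α - 1)) * rexp (-a * -α)) * h1 +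
    (1 / (2 * √(lam T α t))) * T⁻¹ * h2

lemma fker_eq_zero_right {u v : ℝ} (hv : v ∉ Set.Icc 0 t) : fker T α t u v = 0 :=
  if_neg fun h => hv h.2

lemma contr_fker_logarithmic (hT : 0 < T) (ht : t < T) (hlam : 0 < lam T α t) {a b : ℝ}
    (ha : a ∈ Set.Icc 0 (log (T / (T - t)))) (hb : b ∈ Set.Icc 0 (log (T / (T - t)))) :
    contr T (fker T α t) (fker T α t) (T - T * rexp (-a)) (T - T * rexp (-b)) =
      1 / (4 * lam T α t) * (T⁻¹ * (rexp (a / 2) * rexp (b / 2))) *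
        ∫ c in Set.Icc 0 (log (T / (T - t))),
          rexp (-(α - 1 / 2) * |a - c|) * rexp (-(α - 1 / 2) * |b - c|) := by
  rw [contr, setIntegral_eq_of_subset_of_forall_sdiff_eq_zero measurableSet_Icc
    (Set.Icc_subset_Icc_right ht.le) fun u hu => by rw [fker_eq_zero_right hu.2, zero_mul],
    setIntegral_Icc_eq_logarithmic hT ht, ← integral_const_mul]
  refine setIntegral_congr_fun measurableSet_Icc fun c hc => ?_
  rw [fker_logarithmic hT ht ha hc, fker_logarithmic hT ht hb hc]
  have h1 : rexp (-c) * (rexp (c / 2) * rexp (c / 2)) = 1 := by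
    rw [← exp_add, ← exp_add, ← exp_zero]
    ring_nf
  have h2 : √(lam T α t) * √(lam T α t) = lam T α t := mul_self_sqrt hlam.le
  have h3 : 1 / (2 * √(lam T α t)) * (1 / (2 * √(lam T α t))) = 1 / (4 * lam T α t) := by
    rw [div_mul_div_comm, mul_mul_mul_comm, h2]
    norm_num
  have h4 : T * T⁻¹ = 1 := mul_inv_cancel₀ hT.ne'
  rw [← h3]
  generalize rexp (-c) = e at *
  generalize rexp (c / 2) = e' at *
  generalize 1 / (2 * √(lam T α t)) = k
  calc _ = k * k * (T⁻¹ * (rexp (a / 2) * rexp (b / 2))) *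
        (rexp (-(α - 1 / 2) * |a - c|) * rexp (-(α - 1 / 2) * |b - c|)) *
        (T * T⁻¹) * (e * (e' * e')) := by ring
    _ = _ := by rw [h4, h1, mul_one, mul_one]

lemma contr_fker_eq_zero_left {x y : ℝ} (hx : x ∉ Set.Icc 0 t) :
    contr T (fker T α t) (fker T α t) x y = 0 := by
  simp [contr, fker_comm x, fker_eq_zero_right hx]

lemma contr_fker_eq_zero_right {x y : ℝ} (hy : y ∉ Set.Icc 0 t) :
    contr T (fker T α t) (fker T α t) x y = 0 := by
  simp [contr, fker_comm y, fker_eq_zero_right hy]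

lemma normSq_contr_fker (hT : 0 < T) (ht : t < T) (hlam : 0 < lam T α t) :
    normSq T (contr T (fker T α t) (fker T α t)) =
      1 / (16 * lam T α t ^ 2) * ∫ a in Set.Icc 0 (log (T / (T - t))),
        ∫ b in Set.Icc 0 (log (T / (T - t))), (∫ c in Set.Icc 0 (log (T / (T - t))),
          rexp (-(α - 1 / 2) * |a - c|) * rexp (-(α - 1 / 2) * |b - c|)) ^ 2 := by
  rw [normSq, ip, setIntegral_eq_of_subset_of_forall_sdiff_eq_zero measurableSet_Icc
    (Set.Icc_subset_Icc_right ht.le) fun u hu => by simp [contr_fker_eq_zero_left hu.2],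
    setIntegral_Icc_eq_logarithmic hT ht, ← integral_const_mul]
  refine setIntegral_congr_fun measurableSet_Icc fun a ha => ?_
  rw [setIntegral_eq_of_subset_of_forall_sdiff_eq_zero measurableSet_Icc
    (Set.Icc_subset_Icc_right ht.le) fun u hu => by simp [contr_fker_eq_zero_right hu.2],
    setIntegral_Icc_eq_logarithmic hT ht, ← integral_const_mul, ← integral_const_mul]
  refine setIntegral_congr_fun measurableSet_Icc fun b hb => ?_
  rw [contr_fker_logarithmic hT ht hlam ha hb]
  have h (z : ℝ) : rexp (-z) * (rexp (z / 2) * rexp (z / 2)) = 1 := by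
    rw [← exp_add, ← exp_add, ← exp_zero]
    ring_nf
  have h4 : T * T⁻¹ = 1 := mul_inv_cancel₀ hT.ne'
  generalize (∫ c in Set.Icc 0 (log (T / (T - t))),
    rexp (-(α - 1 / 2) * |a - c|) * rexp (-(α - 1 / 2) * |b - c|)) = J
  calc _ = (1 / (4 * lam T α t)) ^ 2 * J ^ 2 * (T * T⁻¹) ^ 2 *
        (rexp (-a) * (rexp (a / 2) * rexp (a / 2))) *
        (rexp (-b) * (rexp (b / 2) * rexp (b / 2))) := by ring
    _ = _ := by rw [h4, h, h]; ring

end LogarithmicCoordinate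

lemma tendsto_log_sub_nhdsLT (T : ℝ) : Tendsto (fun t => log (T - t)) (𝓝[<] T) atBot := by
  refine tendsto_log_nhdsGT_zero.comp (tendsto_nhdsWithin_iff.2 ⟨?_, ?_⟩)
  · have h : Tendsto (fun t => T - t) (𝓝 T) (𝓝 (T - T)) := tendsto_id.const_sub T
    rw [sub_self] at h
    exact h.mono_left nhdsWithin_le_nhds
  · filter_upwards [self_mem_nhdsWithin] with t ht using sub_pos.2 (Set.mem_Iio.1 ht)

theorem stmt_9 (T α : ℝ) (hT : 0 < T) (hα : 1 / 2 < α) :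
    Tendsto (fun t => lam T α t * normSq T (contr T (fker T α t) (fker T α t)))
      (𝓝[<] T) (𝓝 (5 / (4 * (2 * α - 1) ^ 2))) := by
  have hβ : 0 < 2 * α - 1 := by linarith
  have hγ : 0 < α - 1 / 2 := by linarith
  have hlog := tendsto_log_sub_nhdsLT T
  have hL : Tendsto (fun t => log T - log (T - t)) (𝓝[<] T) atTop := by
    simpa only [sub_eq_add_neg, Function.comp_def] using
      tendsto_atTop_add_const_left _ (log T) (tendsto_neg_atBot_atTop.comp hlog)
  have hratio : Tendsto (fun t => (2 * α - 1) * (1 - log T * (log (T - t))⁻¹)) (𝓝[<] T)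
      (𝓝 (2 * α - 1)) := by
    simpa using ((((tendsto_inv_atBot_zero.comp hlog).const_mul (log T)).const_sub 1).const_mul
      (2 * α - 1))
  have hlim := ((hratio.mul ((tendsto_integral_truncConv_sq hγ).comp hL)).const_mul (1 / 16))
  have hval : 1 / 16 * ((2 * α - 1) * (5 / (2 * (α - 1 / 2) ^ 3))) =
      5 / (4 * (2 * α - 1) ^ 2) := by
    rw [show α - 1 / 2 = (2 * α - 1) / 2 by ring]
    field_simp
    norm_num
  rw [hval] at hlim
  refine hlim.congr' ?_
  filter_upwards [self_mem_nhdsWithin, hlog.eventually_lt_atBot 0, hL.eventually_gt_atTop 0]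
    with t ht hneg hpos
  have ht' : t < T := ht
  have hlam : lam T α t = -log (T - t) / (2 * α - 1) := by rw [lam, abs_of_neg hneg]
  have hlam0 : 0 < lam T α t := hlam ▸ div_pos (neg_pos.2 hneg) hβ
  rw [normSq_contr_fker hT ht' hlam0, log_div hT.ne' (sub_pos.2 ht').ne',
    integral_sq_exp_contraction hpos, hlam, Function.comp_apply]
  have hne := hneg.ne
  generalize (∫ x in Set.Icc (0 : ℝ) 1, (_ : ℝ)) = I
  field_simp
  ring
end

section
/- There exists a constant C > 0, depending only on α and T, such that for every t with max(0, T − 1/e) < t < T one has |⟨f_t, g_t⟩| ≤ C/√λ_t. -/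
open MeasureTheory Real Filter Topology

/-- The power `(T - v) ^ r` cut off to `[a, b]` is integrable when `b < T`. -/
lemma integrable_indicator_sub_rpow {T a b : ℝ} (hb : b < T) (r : ℝ) :
    Integrable ((Set.Icc a b).indicator fun v : ℝ => (T - v) ^ r) := by
  rw [integrable_indicator_iff measurableSet_Icc]
  refine ContinuousOn.integrableOn_Icc fun v hv => ContinuousAt.continuousWithinAt ?_
  exact (continuousAt_const.sub continuousAt_id).rpow_const
    (Or.inl (sub_pos.2 (hv.2.trans_lt hb)).ne')

lemma setIntegral_indicator_sub_rpow {T a b : ℝ} (ha : 0 ≤ a) (hab : a ≤ b) (hb : b < T) (r : ℝ) :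
    ∫ v in Set.Icc 0 T, (Set.Icc a b).indicator (fun v : ℝ => (T - v) ^ r) v =
      ∫ x in (T - b)..(T - a), x ^ r := by
  rw [setIntegral_indicator measurableSet_Icc,
    Set.inter_eq_self_of_subset_right (Set.Icc_subset_Icc ha hb.le), integral_Icc_eq_integral_Ioc,
    ← intervalIntegral.integral_of_le hab,
    intervalIntegral.integral_comp_sub_left (fun x => x ^ r) T]

lemma integral_rpow_of_pos {a b r : ℝ} (ha : 0 < a) (hab : a ≤ b) (hr : r ≠ -1) :
    ∫ x in a..b, x ^ r = (b ^ (r + 1) - a ^ (r + 1)) / (r + 1) := by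
  refine integral_rpow (Or.inr ⟨hr, ?_⟩)
  rw [Set.uIcc_of_le hab]
  exact fun h => ha.not_ge h.1

/-- Pointwise bound for the product of the two kernels. -/
lemma abs_fker_mul_gker_le {T α t u v : ℝ} (hα : 1 / 2 < α) (htT : t < T) (hu : u ∈ Set.Icc 0 t) :
    |fker T α t u v * gker T α t u v| ≤ 1 / (2 * √(lam T α t)) / |log (T - t)| *
      ((T - u) ^ (2 * α - 2) * (Set.Icc 0 u).indicator (fun v : ℝ => (T - v) ^ (-(2 * α))) v +
        (T - u) ^ (-(2 * α)) * (Set.Icc u t).indicator (fun v : ℝ => (T - v) ^ (2 * α - 2)) v) := by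
  have hTu : 0 < T - u := sub_pos.2 (hu.2.trans_lt htT)
  have hTt : 0 < T - t := sub_pos.2 htT
  have hind₁ : 0 ≤ (T - u) ^ (2 * α - 2) *
      (Set.Icc 0 u).indicator (fun v : ℝ => (T - v) ^ (-(2 * α))) v :=
    mul_nonneg (by positivity) (Set.indicator_nonneg
      (fun w hw => rpow_nonneg (by linarith [hw.2]) _) v)
  have hind₂ : 0 ≤ (T - u) ^ (-(2 * α)) *
      (Set.Icc u t).indicator (fun v : ℝ => (T - v) ^ (2 * α - 2)) v :=
    mul_nonneg (by positivity) (Set.indicator_nonneg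
      (fun w hw => rpow_nonneg (by linarith [hw.2]) _) v)
  by_cases hv : v ∈ Set.Icc 0 t
  swap
  · simp only [fker, gker, hv, and_false, if_false, mul_zero, abs_zero]
    positivity
  have hTv : 0 < T - v := sub_pos.2 (hv.2.trans_lt htT)
  -- `x` is the distance of the larger variable to `T`, `y` that of the smaller one.
  have key : ∀ x y : ℝ, T - t ≤ x → 0 < y →
      |1 / (2 * √(lam T α t)) * x ^ (α - 1) * y ^ (-α) *
        (y ^ (-α) * x ^ (-α) * (x ^ (2 * α - 1) - (T - t) ^ (2 * α - 1)) / |log (T - t)|)| ≤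
      1 / (2 * √(lam T α t)) / |log (T - t)| * (x ^ (2 * α - 2) * y ^ (-(2 * α))) := by
    intro x y hx hy
    have hx0 : 0 < x := hTt.trans_le hx
    have hsub : 0 ≤ x ^ (2 * α - 1) - (T - t) ^ (2 * α - 1) :=
      sub_nonneg.2 (rpow_le_rpow hTt.le hx (by linarith))
    rw [abs_of_nonneg (by positivity)]
    have hxpow : x ^ (2 * α - 2) = x ^ (α - 1) * x ^ (-α) * x ^ (2 * α - 1) := by
      rw [← rpow_add hx0, ← rpow_add hx0]
      ring_nf
    have hypow : y ^ (-(2 * α)) = y ^ (-α) * y ^ (-α) := by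
      rw [← rpow_add hy]
      ring_nf
    have hle : x ^ (2 * α - 1) - (T - t) ^ (2 * α - 1) ≤ x ^ (2 * α - 1) :=
      sub_le_self _ (by positivity)
    calc _ = 1 / (2 * √(lam T α t)) / |log (T - t)| * (x ^ (α - 1) * x ^ (-α) *
          (x ^ (2 * α - 1) - (T - t) ^ (2 * α - 1)) * (y ^ (-α) * y ^ (-α))) := by ring
      _ ≤ 1 / (2 * √(lam T α t)) / |log (T - t)| * (x ^ (α - 1) * x ^ (-α) *
          x ^ (2 * α - 1) * (y ^ (-α) * y ^ (-α))) := by gcongr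
      _ = _ := by rw [hxpow, hypow]
  simp only [fker, gker, hu, hv, and_self, if_true]
  rcases le_total v u with h | h
  · rw [max_eq_left h, min_eq_right h, mul_comm ((T - u) ^ (-α)) ((T - v) ^ (-α))]
    refine (key (T - u) (T - v) (by linarith [hu.2]) hTv).trans ?_
    rw [Set.indicator_of_mem (show v ∈ Set.Icc 0 u from ⟨hv.1, h⟩)]
    gcongr
    exact le_add_of_nonneg_right hind₂
  · rw [max_eq_right h, min_eq_left h]
    refine (key (T - v) (T - u) (by linarith [hv.2]) hTu).trans ?_
    rw [Set.indicator_of_mem (show v ∈ Set.Icc u t from ⟨h, hv.2⟩),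
      mul_comm ((T - v) ^ (2 * α - 2))]
    gcongr
    exact le_add_of_nonneg_left hind₁

/-- Bound for the inner integral of `⟨f_t, g_t⟩`. -/
lemma abs_integral_fker_mul_gker_le {T α t u : ℝ} (hα : 1 / 2 < α) (htT : t < T)
    (hu : u ∈ Set.Icc 0 t) :
    |∫ v in Set.Icc 0 T, fker T α t u v * gker T α t u v| ≤
      1 / (2 * √(lam T α t)) / |log (T - t)| * (2 / (2 * α - 1)) * (T - u) ^ (-1 : ℝ) := by
  have huT : u < T := hu.2.trans_lt htT
  have hTu : 0 < T - u := sub_pos.2 huT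
  have hTt : 0 < T - t := sub_pos.2 htT
  have hβ : 0 < 2 * α - 1 := by linarith
  have hint₁ := ((integrable_indicator_sub_rpow (a := 0) huT (-(2 * α))).const_mul
    ((T - u) ^ (2 * α - 2))).integrableOn (s := Set.Icc 0 T)
  have hint₂ := ((integrable_indicator_sub_rpow (a := u) htT (2 * α - 2)).const_mul
    ((T - u) ^ (-(2 * α)))).integrableOn (s := Set.Icc 0 T)
  refine (norm_integral_le_of_norm_le (f := fun v => fker T α t u v * gker T α t u v)
    ((hint₁.add hint₂).const_mul
    (1 / (2 * √(lam T α t)) / |log (T - t)|))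
    (ae_of_all _ fun v => abs_fker_mul_gker_le hα htT hu)).trans ?_
  simp only [Pi.add_apply]
  rw [integral_const_mul, integral_add hint₁ hint₂, integral_const_mul, integral_const_mul,
    setIntegral_indicator_sub_rpow le_rfl hu.1 huT,
    setIntegral_indicator_sub_rpow hu.1 hu.2 htT,
    integral_rpow_of_pos hTu (by linarith [hu.1]) (by linarith),
    integral_rpow_of_pos hTt (by linarith [hu.2]) (by linarith), mul_assoc]
  gcongr
  have hfst : (T - u) ^ (2 * α - 2) * (((T - 0) ^ (-(2 * α) + 1) - (T - u) ^ (-(2 * α) + 1)) /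
      (-(2 * α) + 1)) ≤ 1 / (2 * α - 1) * (T - u) ^ (-1 : ℝ) := by
    have hmul : (T - u) ^ (-1 : ℝ) = (T - u) ^ (2 * α - 2) * (T - u) ^ (-(2 * α) + 1) := by
      rw [← rpow_add hTu]
      ring_nf
    have hT0 : 0 ≤ (T - 0) ^ (-(2 * α) + 1) := rpow_nonneg (by linarith [hu.1]) _
    rw [hmul, show -(2 * α) + 1 = -(2 * α - 1) by ring, div_neg, ← neg_div, neg_sub, mul_left_comm,
      one_div_mul_eq_div]
    gcongr
    refine sub_le_self _ ?_
    rwa [show -(2 * α - 1) = -(2 * α) + 1 by ring]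
  have hsnd : (T - u) ^ (-(2 * α)) * (((T - u) ^ (2 * α - 2 + 1) - (T - t) ^ (2 * α - 2 + 1)) /
      (2 * α - 2 + 1)) ≤ 1 / (2 * α - 1) * (T - u) ^ (-1 : ℝ) := by
    have hmul : (T - u) ^ (-1 : ℝ) = (T - u) ^ (-(2 * α)) * (T - u) ^ (2 * α - 1) := by
      rw [← rpow_add hTu]
      ring_nf
    rw [hmul, show 2 * α - 2 + 1 = 2 * α - 1 by ring, mul_left_comm, one_div_mul_eq_div]
    gcongr
    exact sub_le_self _ (by positivity)
  calc _ ≤ 1 / (2 * α - 1) * (T - u) ^ (-1 : ℝ) + 1 / (2 * α - 1) * (T - u) ^ (-1 : ℝ) :=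
        add_le_add hfst hsnd
    _ = _ := by ring

theorem stmt_12 (T α : ℝ) (hT : 0 < T) (hα : 1 / 2 < α) :
    ∃ C > 0, ∀ t : ℝ, max 0 (T - 1 / Real.exp 1) < t → t < T →
      |ip T (fker T α t) (gker T α t)| ≤ C / Real.sqrt (lam T α t) := by
  have hβ : 0 < 2 * α - 1 := by linarith
  refine ⟨(1 + |log T|) / (2 * α - 1), by positivity, fun t ht htT => ?_⟩
  obtain ⟨ht0, hte⟩ := max_lt_iff.1 ht
  have hTt : 0 < T - t := sub_pos.2 htT
  have hlog : log (T - t) < -1 := by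
    rw [log_lt_iff_lt_exp hTt, exp_neg, ← one_div]
    linarith
  have habs : |log (T - t)| = -log (T - t) := abs_of_neg (by linarith)
  have hpos : 0 < |log (T - t)| := by linarith
  have hbound : ∀ u, |∫ v in Set.Icc 0 T, fker T α t u v * gker T α t u v| ≤
      1 / (2 * √(lam T α t)) / |log (T - t)| * (2 / (2 * α - 1)) *
        (Set.Icc 0 t).indicator (fun u : ℝ => (T - u) ^ (-1 : ℝ)) u := by
    intro u
    by_cases hu : u ∈ Set.Icc 0 t
    · rw [Set.indicator_of_mem hu]
      exact abs_integral_fker_mul_gker_le hα htT hu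
    · simp [fker, hu]
  refine (norm_integral_le_of_norm_le
    (f := fun u => ∫ v in Set.Icc 0 T, fker T α t u v * gker T α t u v)
    ((integrable_indicator_sub_rpow (a := 0) htT (-1)).const_mul
      (1 / (2 * √(lam T α t)) / |log (T - t)| * (2 / (2 * α - 1)))).integrableOn
    (ae_of_all _ hbound)).trans ?_
  have hquot : (log T + |log (T - t)|) / |log (T - t)| ≤ 1 + |log T| := by
    rw [div_le_iff₀ hpos]
    nlinarith [le_abs_self (log T), abs_nonneg (log T)]
  rw [integral_const_mul, setIntegral_indicator_sub_rpow le_rfl ht0.le htT]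
  simp only [rpow_neg_one, sub_zero]
  rw [integral_inv_of_pos hTt hT, log_div hT.ne' hTt.ne', sub_eq_add_neg (log T), ← habs]
  calc _ = (log T + |log (T - t)|) / |log (T - t)| / (2 * α - 1) / √(lam T α t) := by ring
    _ ≤ _ := by gcongr
end

section
/- As t ↑ T, the ratio ‖f_t ⊗₁ f_t‖ / ⟨f_t ⊗₁ f_t, f_t⟩ converges to 2√5/3, and the ratio (2‖f_t‖² − 1) / ⟨f_t ⊗₁ f_t, f_t⟩ converges to 0. -/
open MeasureTheory Real Filter Topology

lemma log_coord_mem_Icc {T t x : ℝ} (ht0 : 0 ≤ t) (htT : t < T)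
    (hx : x ∈ Set.Icc 0 (Real.log (T / (T - t)))) : T - T * exp (-x) ∈ Set.Icc 0 t := by
  have hT : 0 < T := ht0.trans_lt htT
  have hε : 0 < T - t := sub_pos.2 htT
  have e1 : exp (-x) ≤ 1 := exp_le_one_iff.2 (by linarith [hx.1])
  have e2 : (T - t) / T ≤ exp (-x) := by
    have : exp (-Real.log (T / (T - t))) = (T - t) / T := by
      rw [exp_neg, exp_log (by positivity), inv_div]
    rw [← this]
    exact exp_le_exp.2 (by linarith [hx.2])
  rw [div_le_iff₀ hT] at e2
  constructor <;> nlinarith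

/-- A set integral over `[0, T]` of a function supported in `[0, t]`, in the logarithmic coordinate
`u = T - T e^{-x}`. -/
lemma setIntegral_Icc_eq_log_coord {T t : ℝ} (ht0 : 0 ≤ t) (htT : t < T) (F : ℝ → ℝ)
    (hF : ∀ u, u ∉ Set.Icc (0:ℝ) t → F u = 0) :
    ∫ u in Set.Icc (0:ℝ) T, F u =
      ∫ x in (0:ℝ)..Real.log (T / (T - t)), T * exp (-x) * F (T - T * exp (-x)) := by
  have hT : 0 < T := ht0.trans_lt htT
  have hε : 0 < T - t := sub_pos.2 htT
  have hℓ : 0 ≤ Real.log (T / (T - t)) :=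
    Real.log_nonneg ((one_le_div hε).2 (by linarith))
  have himage : (fun x : ℝ => T - T * exp (-x)) '' Set.Icc 0 (Real.log (T / (T - t)))
      = Set.Icc 0 t := by
    ext u
    constructor
    · rintro ⟨x, hx, rfl⟩
      exact log_coord_mem_Icc ht0 htT hx
    · rintro ⟨h0, h1⟩
      have hu : 0 < T - u := by linarith
      refine ⟨Real.log (T / (T - u)), ⟨Real.log_nonneg ((one_le_div hu).2 (by linarith)), ?_⟩, ?_⟩
      · exact Real.log_le_log (by positivity) (by gcongr)
      · simp only
        rw [exp_neg, exp_log (by positivity), inv_div]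
        field_simp
        ring
  have hsub : ∫ u in Set.Icc (0:ℝ) T, F u = ∫ u in Set.Icc (0:ℝ) t, F u :=
    setIntegral_eq_of_subset_of_forall_sdiff_eq_zero measurableSet_Icc
      (Set.Icc_subset_Icc_right htT.le) (fun u hu => hF u hu.2)
  rw [hsub, ← himage, integral_image_eq_integral_abs_deriv_smul (f' := fun x => T * exp (-x))
    measurableSet_Icc, intervalIntegral.integral_of_le hℓ, integral_Icc_eq_integral_Ioc]
  · refine setIntegral_congr_fun measurableSet_Ioc fun x _ => ?_
    simp only [smul_eq_mul]
    rw [abs_of_pos (by positivity)]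
  · intro x _
    have h := (((hasDerivAt_id x).neg.exp).const_mul T).const_sub T
    simpa using h.hasDerivWithinAt
  · intro x _ y _ hxy
    have : exp (-x) = exp (-y) := by
      have : T * exp (-x) = T * exp (-y) := by simpa using hxy
      exact mul_left_cancel₀ hT.ne' this
    simpa using this

/-- In logarithmic coordinates `f_t` is a multiple of the Toeplitz kernel `e^{-(α-1/2)|x-y|}`. -/
lemma fker_log_coord {T α t x y : ℝ} (ht0 : 0 ≤ t) (htT : t < T)
    (hx : x ∈ Set.Icc 0 (Real.log (T / (T - t)))) (hy : y ∈ Set.Icc 0 (Real.log (T / (T - t)))) :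
    fker T α t (T - T * exp (-x)) (T - T * exp (-y)) =
      1 / (2 * √(lam T α t)) * T⁻¹ * exp (x / 2) * exp (y / 2) *
        exp (-((α - 1 / 2) * |x - y|)) := by
  have hT : 0 < T := ht0.trans_lt htT
  have hpow : ∀ z p : ℝ, (T * exp (-z)) ^ p = T ^ p * exp (-z * p) := fun z p => by
    rw [mul_rpow hT.le (exp_pos _).le, ← exp_mul]
  have hTT : T ^ (α - 1) * T ^ (-α) = T⁻¹ := by
    rw [← rpow_add hT, ← rpow_neg_one]
    congr 1
    ring
  rw [fker, if_pos ⟨log_coord_mem_Icc ht0 htT hx, log_coord_mem_Icc ht0 htT hy⟩]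
  rcases le_total x y with h | h
  · have h' : T - T * exp (-x) ≤ T - T * exp (-y) := by gcongr
    rw [max_eq_right h', min_eq_left h', sub_sub_cancel, sub_sub_cancel, hpow, hpow,
      abs_of_nonpos (sub_nonpos.2 h), ← hTT]
    have : exp (x / 2) * exp (y / 2) * exp (-((α - 1 / 2) * -(x - y)))
        = exp (-y * (α - 1)) * exp (-x * -α) := by
      rw [← exp_add, ← exp_add, ← exp_add]
      congr 1
      ring
    linear_combination (-(1 / (2 * √(lam T α t)) * (T ^ (α - 1) * T ^ (-α)))) * this
  · have h' : T - T * exp (-y) ≤ T - T * exp (-x) := by gcongr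
    rw [max_eq_left h', min_eq_right h', sub_sub_cancel, sub_sub_cancel, hpow, hpow,
      abs_of_nonneg (sub_nonneg.2 h), ← hTT]
    have : exp (x / 2) * exp (y / 2) * exp (-((α - 1 / 2) * (x - y)))
        = exp (-x * (α - 1)) * exp (-y * -α) := by
      rw [← exp_add, ← exp_add, ← exp_add]
      congr 1
      ring
    linear_combination (-(1 / (2 * √(lam T α t)) * (T ^ (α - 1) * T ^ (-α)))) * this

/-- The inner product of two kernels supported in `[0, t]²`, in logarithmic coordinates. -/
lemma ip_eq_of_log_coord {T t : ℝ} (ht0 : 0 ≤ t) (htT : t < T) {p q P Q : ℝ → ℝ → ℝ}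
    (hq : ∀ u v, ¬ (u ∈ Set.Icc 0 t ∧ v ∈ Set.Icc 0 t) → q u v = 0)
    (hP : ∀ x ∈ Set.Icc 0 (Real.log (T / (T - t))), ∀ y ∈ Set.Icc 0 (Real.log (T / (T - t))),
      p (T - T * exp (-x)) (T - T * exp (-y)) = T⁻¹ * exp (x / 2) * exp (y / 2) * P x y)
    (hQ : ∀ x ∈ Set.Icc 0 (Real.log (T / (T - t))), ∀ y ∈ Set.Icc 0 (Real.log (T / (T - t))),
      q (T - T * exp (-x)) (T - T * exp (-y)) = T⁻¹ * exp (x / 2) * exp (y / 2) * Q x y) :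
    ip T p q = ∫ x in (0:ℝ)..Real.log (T / (T - t)), ∫ y in (0:ℝ)..Real.log (T / (T - t)),
      P x y * Q x y := by
  have hT : 0 < T := ht0.trans_lt htT
  have hℓ : 0 ≤ Real.log (T / (T - t)) :=
    Real.log_nonneg ((one_le_div (sub_pos.2 htT)).2 (by linarith))
  rw [ip, setIntegral_Icc_eq_log_coord ht0 htT]
  · refine intervalIntegral.integral_congr fun x hx => ?_
    rw [Set.uIcc_of_le hℓ] at hx
    rw [setIntegral_Icc_eq_log_coord ht0 htT, ← intervalIntegral.integral_const_mul]
    · refine intervalIntegral.integral_congr fun y hy => ?_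
      rw [Set.uIcc_of_le hℓ] at hy
      rw [hP x hx y hy, hQ x hx y hy]
      have h1 : ∀ z : ℝ, exp (-z) * (exp (z / 2) * exp (z / 2)) = 1 := fun z => by
        rw [← exp_add, ← exp_add, exp_eq_one_iff]
        ring
      have h2 : T * T⁻¹ = 1 := mul_inv_cancel₀ hT.ne'
      calc _ = (T * T⁻¹) * (T * T⁻¹) * (exp (-x) * (exp (x / 2) * exp (x / 2))) *
            (exp (-y) * (exp (y / 2) * exp (y / 2))) * (P x y * Q x y) := by ring
        _ = _ := by rw [h1, h1, h2]; ring
    · intro v hv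
      rw [hq _ _ (fun h => hv h.2), mul_zero]
  · intro u hu
    simp [hq u _ (fun h => hu h.1)]

/-- The contraction `e^{-b|·|} ⊗₁ e^{-b|·|}` on `[0, ℓ]`. -/
noncomputable def expContr (b ℓ x y : ℝ) : ℝ :=
  ∫ z in (0:ℝ)..ℓ, exp (-(b * |x - z|)) * exp (-(b * |y - z|))

lemma contr_fker_log_coord {T α t x y : ℝ} (ht0 : 0 ≤ t) (htT : t < T)
    (hx : x ∈ Set.Icc 0 (Real.log (T / (T - t)))) (hy : y ∈ Set.Icc 0 (Real.log (T / (T - t)))) :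
    contr T (fker T α t) (fker T α t) (T - T * exp (-x)) (T - T * exp (-y)) =
      T⁻¹ * exp (x / 2) * exp (y / 2) * ((1 / (2 * √(lam T α t))) ^ 2 *
        expContr (α - 1 / 2) (Real.log (T / (T - t))) x y) := by
  have hT : 0 < T := ht0.trans_lt htT
  have hℓ : 0 ≤ Real.log (T / (T - t)) :=
    Real.log_nonneg ((one_le_div (sub_pos.2 htT)).2 (by linarith))
  rw [contr, setIntegral_Icc_eq_log_coord ht0 htT, expContr, ← mul_assoc,
    ← intervalIntegral.integral_const_mul]
  · refine intervalIntegral.integral_congr fun z hz => ?_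
    rw [Set.uIcc_of_le hℓ] at hz
    rw [fker_log_coord ht0 htT hx hz, fker_log_coord ht0 htT hy hz]
    have h1 : exp (-z) * (exp (z / 2) * exp (z / 2)) = 1 := by
      rw [← exp_add, ← exp_add, exp_eq_one_iff]
      ring
    have h2 : T * T⁻¹ = 1 := mul_inv_cancel₀ hT.ne'
    generalize exp (-((α - 1 / 2) * |x - z|)) = A
    generalize exp (-((α - 1 / 2) * |y - z|)) = B
    generalize 1 / (2 * √(lam T α t)) = c
    calc _ = (T * T⁻¹) * (exp (-z) * (exp (z / 2) * exp (z / 2))) *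
          (T⁻¹ * exp (x / 2) * exp (y / 2) * c ^ 2 * (A * B)) := by ring
      _ = _ := by rw [h1, h2]; ring
  · intro u hu
    rw [fker, if_neg (fun h => hu h.2), zero_mul]

lemma integral_exp_mul' {c : ℝ} (hc : c ≠ 0) (p q : ℝ) :
    ∫ z in p..q, exp (c * z) = (exp (c * q) - exp (c * p)) / c := by
  rw [intervalIntegral.integral_comp_mul_left (fun z => exp z) hc, integral_exp, smul_eq_mul]
  ring

lemma expContr_symm (b ℓ x y : ℝ) : expContr b ℓ x y = expContr b ℓ y x := by
  simp only [expContr, mul_comm]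

lemma expContr_eq_of_le {b ℓ x y : ℝ} (hb : 0 < b) (hx : 0 ≤ x) (hxy : x ≤ y) (hy : y ≤ ℓ) :
    expContr b ℓ x y = exp (-(b * (y - x))) * (1 / b + (y - x)) -
      (exp (-(b * x)) * exp (-(b * y)) + exp (-(b * (ℓ - x))) * exp (-(b * (ℓ - y)))) / (2 * b) := by
  have hint : ∀ p q : ℝ, IntervalIntegrable
      (fun z => exp (-(b * |x - z|)) * exp (-(b * |y - z|))) volume p q := fun p q =>
    Continuous.intervalIntegrable (by fun_prop) _ _
  have h2b : 2 * b ≠ 0 := by positivity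
  have h2b' : -(2 * b) ≠ 0 := by simpa using hb.ne'
  rw [expContr, ← intervalIntegral.integral_add_adjacent_intervals (hint 0 x) (hint x ℓ),
    ← intervalIntegral.integral_add_adjacent_intervals (hint x y) (hint y ℓ)]
  have i1 : ∫ z in (0:ℝ)..x, exp (-(b * |x - z|)) * exp (-(b * |y - z|)) =
      exp (-(b * (x + y))) * ((exp (2 * b * x) - exp (2 * b * 0)) / (2 * b)) := by
    rw [← integral_exp_mul' h2b, ← intervalIntegral.integral_const_mul]
    refine intervalIntegral.integral_congr fun z hz => ?_
    rw [Set.uIcc_of_le hx] at hz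
    rw [abs_of_nonneg (by linarith [hz.2]), abs_of_nonneg (by linarith [hz.2]), ← exp_add,
      ← exp_add]
    congr 1
    ring
  have i2 : ∫ z in x..y, exp (-(b * |x - z|)) * exp (-(b * |y - z|)) =
      (y - x) * exp (-(b * (y - x))) := by
    rw [← smul_eq_mul, ← intervalIntegral.integral_const]
    refine intervalIntegral.integral_congr fun z hz => ?_
    rw [Set.uIcc_of_le hxy] at hz
    rw [abs_of_nonpos (by linarith [hz.1]), abs_of_nonneg (by linarith [hz.2]), ← exp_add]
    congr 1
    ring
  have i3 : ∫ z in y..ℓ, exp (-(b * |x - z|)) * exp (-(b * |y - z|)) =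
      exp (b * (x + y)) * ((exp (-(2 * b) * ℓ) - exp (-(2 * b) * y)) / (-(2 * b))) := by
    rw [← integral_exp_mul' h2b', ← intervalIntegral.integral_const_mul]
    refine intervalIntegral.integral_congr fun z hz => ?_
    rw [Set.uIcc_of_le hy] at hz
    rw [abs_of_nonpos (by linarith [hz.1]), abs_of_nonpos (by linarith [hz.1]), ← exp_add,
      ← exp_add]
    congr 1
    ring
  rw [i1, i2, i3]
  have e1 : exp (-(b * (x + y))) * exp (2 * b * x) = exp (-(b * (y - x))) := by
    rw [← exp_add]; congr 1; ring
  have e2 : exp (-(b * x)) * exp (-(b * y)) = exp (-(b * (x + y))) := by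
    rw [← exp_add]; congr 1; ring
  have e3 : exp (b * (x + y)) * exp (-(2 * b) * y) = exp (-(b * (y - x))) := by
    rw [← exp_add]; congr 1; ring
  have e4 : exp (-(b * (ℓ - x))) * exp (-(b * (ℓ - y))) =
      exp (b * (x + y)) * exp (-(2 * b) * ℓ) := by
    rw [← exp_add, ← exp_add]; congr 1; ring
  rw [e2, e4, mul_zero, exp_zero]
  linear_combination (e1 + e3) / (2 * b)

/-- The boundary correction in the contraction of `e^{-b|·|}` with itself on `[0, ℓ]`. -/
noncomputable def expCorr (b ℓ x y : ℝ) : ℝ :=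
  (exp (-(b * x)) * exp (-(b * y)) + exp (-(b * (ℓ - x))) * exp (-(b * (ℓ - y)))) / (2 * b)

lemma expContr_eq {b ℓ x y : ℝ} (hb : 0 < b) (hx : x ∈ Set.Icc 0 ℓ) (hy : y ∈ Set.Icc 0 ℓ) :
    expContr b ℓ x y = exp (-(b * |x - y|)) * (1 / b + |x - y|) - expCorr b ℓ x y := by
  rcases le_total x y with h | h
  · rw [expContr_eq_of_le hb hx.1 h hy.2, abs_sub_comm, abs_of_nonneg (sub_nonneg.2 h), expCorr]
  · rw [expContr_symm, expContr_eq_of_le hb hy.1 h hx.2, abs_of_nonneg (sub_nonneg.2 h), expCorr]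
    ring

lemma expContr_nonneg {b ℓ : ℝ} (hℓ : 0 ≤ ℓ) (x y : ℝ) : 0 ≤ expContr b ℓ x y :=
  intervalIntegral.integral_nonneg hℓ fun _ _ => by positivity

lemma expCorr_nonneg {b : ℝ} (hb : 0 < b) (ℓ x y : ℝ) : 0 ≤ expCorr b ℓ x y := by
  unfold expCorr
  positivity

lemma exp_neg_mul_le_inv {b d : ℝ} (hb : 0 < b) : exp (-(b * d)) * (1 / b + d) ≤ 1 / b := by
  have h := add_one_le_exp (b * d)
  have h2 : exp (-(b * d)) * exp (b * d) = 1 := by rw [← exp_add]; simp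
  have h3 : exp (-(b * d)) * (1 / b + d) = exp (-(b * d)) * (b * d + 1) / b := by
    field_simp
    ring
  rw [h3]
  gcongr
  calc _ ≤ exp (-(b * d)) * exp (b * d) := by gcongr
    _ = 1 := h2

lemma integral_integral_expCorr_le {b ℓ : ℝ} (hb : 0 < b) (hℓ : 0 ≤ ℓ) :
    ∫ x in (0:ℝ)..ℓ, ∫ y in (0:ℝ)..ℓ, expCorr b ℓ x y ≤ 1 / b ^ 3 := by
  set J : ℝ := ∫ x in (0:ℝ)..ℓ, exp (-(b * x)) with hJ
  have hJ' : ∫ x in (0:ℝ)..ℓ, exp (-(b * (ℓ - x))) = J := by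
    rw [intervalIntegral.integral_comp_sub_left (fun x => exp (-(b * x)))]
    simp [hJ]
  have hJle : J ≤ 1 / b := by
    have : J = (1 - exp (-b * ℓ)) / b := by
      rw [hJ]
      simp only [← neg_mul]
      rw [integral_exp_mul' (neg_ne_zero.2 hb.ne'), mul_zero, exp_zero, div_neg, ← neg_div, neg_sub]
    rw [this]
    gcongr
    linarith [exp_pos (-b * ℓ)]
  have hJ0 : 0 ≤ J := intervalIntegral.integral_nonneg hℓ fun _ _ => by positivity
  have hval : ∫ x in (0:ℝ)..ℓ, ∫ y in (0:ℝ)..ℓ, expCorr b ℓ x y = J * J / b := by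
    have hinner : ∀ x, ∫ y in (0:ℝ)..ℓ, expCorr b ℓ x y =
        (exp (-(b * x)) * J + exp (-(b * (ℓ - x))) * J) / (2 * b) := by
      intro x
      simp only [expCorr]
      rw [intervalIntegral.integral_div, intervalIntegral.integral_add
        (Continuous.intervalIntegrable (by fun_prop) _ _)
        (Continuous.intervalIntegrable (by fun_prop) _ _), intervalIntegral.integral_const_mul,
        intervalIntegral.integral_const_mul, hJ', ← hJ]
    simp only [hinner]
    rw [intervalIntegral.integral_div, intervalIntegral.integral_add
        (Continuous.intervalIntegrable (by fun_prop) _ _)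
        (Continuous.intervalIntegrable (by fun_prop) _ _), intervalIntegral.integral_mul_const,
        intervalIntegral.integral_mul_const, hJ', ← hJ]
    field_simp
    ring
  rw [hval]
  calc J * J / b ≤ (1 / b) * (1 / b) / b := by gcongr
    _ = 1 / b ^ 3 := by field_simp

/-- Comparison of two iterated integrals whose integrands differ by at most `K * expCorr`. -/
lemma abs_integral_integral_sub_le {b ℓ K : ℝ} (hb : 0 < b) (hℓ : 0 ≤ ℓ) (hK : 0 ≤ K)
    {F G : ℝ → ℝ → ℝ} (hF : Continuous (Function.uncurry F)) (hG : Continuous (Function.uncurry G))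
    (h : ∀ x ∈ Set.Icc 0 ℓ, ∀ y ∈ Set.Icc 0 ℓ, |F x y - G x y| ≤ K * expCorr b ℓ x y) :
    |(∫ x in (0:ℝ)..ℓ, ∫ y in (0:ℝ)..ℓ, F x y) - ∫ x in (0:ℝ)..ℓ, ∫ y in (0:ℝ)..ℓ, G x y| ≤
      K * (1 / b ^ 3) := by
  have hE : Continuous (Function.uncurry (expCorr b ℓ)) := by
    unfold expCorr Function.uncurry
    fun_prop
  have cont : ∀ {F : ℝ → ℝ → ℝ}, Continuous (Function.uncurry F) →
      Continuous fun x => ∫ y in (0:ℝ)..ℓ, F x y := fun hF =>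
    intervalIntegral.continuous_parametric_intervalIntegral_of_continuous' hF 0 ℓ
  have slice : ∀ {F : ℝ → ℝ → ℝ}, Continuous (Function.uncurry F) → ∀ x,
      IntervalIntegrable (F x) volume 0 ℓ := fun hF x =>
    (hF.comp (Continuous.prodMk_right x)).intervalIntegrable _ _
  have hbound : ∀ x ∈ Set.Icc 0 ℓ,
      |(∫ y in (0:ℝ)..ℓ, F x y) - ∫ y in (0:ℝ)..ℓ, G x y| ≤ K * ∫ y in (0:ℝ)..ℓ, expCorr b ℓ x y := by
    intro x hx
    rw [← intervalIntegral.integral_sub (slice hF x) (slice hG x),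
      ← intervalIntegral.integral_const_mul]
    refine (intervalIntegral.abs_integral_le_integral_abs hℓ).trans ?_
    exact intervalIntegral.integral_mono_on hℓ ((slice hF x).sub (slice hG x)).abs
      ((slice hE x).const_mul K) (h x hx)
  rw [← intervalIntegral.integral_sub ((cont hF).intervalIntegrable _ _)
    ((cont hG).intervalIntegrable _ _)]
  calc _ ≤ ∫ x in (0:ℝ)..ℓ, |(∫ y in (0:ℝ)..ℓ, F x y) - ∫ y in (0:ℝ)..ℓ, G x y| :=
        intervalIntegral.abs_integral_le_integral_abs hℓ
    _ ≤ ∫ x in (0:ℝ)..ℓ, K * ∫ y in (0:ℝ)..ℓ, expCorr b ℓ x y :=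
        intervalIntegral.integral_mono_on hℓ
          (((cont hF).sub (cont hG)).abs.intervalIntegrable _ _)
          (((cont hE).const_mul K).intervalIntegrable _ _) hbound
    _ = K * ∫ x in (0:ℝ)..ℓ, ∫ y in (0:ℝ)..ℓ, expCorr b ℓ x y :=
        intervalIntegral.integral_const_mul _ _
    _ ≤ K * (1 / b ^ 3) := by
        gcongr
        exact integral_integral_expCorr_le hb hℓ

/-- The iterated integral of `R''(|x - y|)` over `[0, ℓ]²`. -/
lemma integral_integral_comp_abs_sub {R R' g : ℝ → ℝ} (hR : ∀ x, HasDerivAt R (R' x) x)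
    (hR' : ∀ x, HasDerivAt R' (g x) x) (hg : Continuous g) {ℓ : ℝ} (hℓ : 0 ≤ ℓ) :
    ∫ x in (0:ℝ)..ℓ, ∫ y in (0:ℝ)..ℓ, g |x - y| = 2 * (R ℓ - R 0) - 2 * ℓ * R' 0 := by
  have hR'c : Continuous R' := continuous_iff_continuousAt.2 fun x => (hR' x).continuousAt
  have ftc' : ∀ p q, ∫ x in p..q, g x = R' q - R' p := fun p q =>
    intervalIntegral.integral_eq_sub_of_hasDerivAt (fun x _ => hR' x) (hg.intervalIntegrable _ _)
  have ftc : ∀ p q, ∫ x in p..q, R' x = R q - R p := fun p q =>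
    intervalIntegral.integral_eq_sub_of_hasDerivAt (fun x _ => hR x) (hR'c.intervalIntegrable _ _)
  have hinner : ∀ x ∈ Set.uIcc 0 ℓ, ∫ y in (0:ℝ)..ℓ, g |x - y| =
      R' x + R' (ℓ - x) - 2 * R' 0 := by
    intro x hx
    rw [Set.uIcc_of_le hℓ] at hx
    have hint : ∀ p q : ℝ, IntervalIntegrable (fun y => g |x - y|) volume p q := fun p q =>
      Continuous.intervalIntegrable (by fun_prop) _ _
    rw [← intervalIntegral.integral_add_adjacent_intervals (hint 0 x) (hint x ℓ)]
    have i1 : ∫ y in (0:ℝ)..x, g |x - y| = R' x - R' 0 := by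
      have : ∫ y in (0:ℝ)..x, g (x - y) = R' x - R' 0 := by
        rw [intervalIntegral.integral_comp_sub_left g, ftc']
        simp
      rw [← this]
      refine intervalIntegral.integral_congr fun y hy => ?_
      rw [Set.uIcc_of_le hx.1] at hy
      rw [abs_of_nonneg (sub_nonneg.2 hy.2)]
    have i2 : ∫ y in x..ℓ, g |x - y| = R' (ℓ - x) - R' 0 := by
      have : ∫ y in x..ℓ, g (y - x) = R' (ℓ - x) - R' 0 := by
        rw [intervalIntegral.integral_comp_sub_right g, ftc']
        simp
      rw [← this]
      refine intervalIntegral.integral_congr fun y hy => ?_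
      rw [Set.uIcc_of_le hx.2] at hy
      rw [abs_sub_comm, abs_of_nonneg (sub_nonneg.2 hy.1)]
    rw [i1, i2]
    ring
  rw [intervalIntegral.integral_congr hinner, intervalIntegral.integral_sub
    (Continuous.intervalIntegrable (by fun_prop) _ _) (by simp), intervalIntegral.integral_add
    (hR'c.intervalIntegrable _ _) (Continuous.intervalIntegrable (by fun_prop) _ _),
    intervalIntegral.integral_comp_sub_left R', ftc, ftc]
  simp
  ring

/-- The iterated integral over `[0, ℓ]²` of an exponentially decaying function of `|x - y|` grows
linearly in `ℓ`, up to a bounded error. -/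
lemma exists_abs_integral_integral_sub_le {b : ℝ} (hb : 0 < b) (A B C : ℝ) :
    ∃ M, ∀ ℓ : ℝ, 0 ≤ ℓ →
      |(∫ x in (0:ℝ)..ℓ, ∫ y in (0:ℝ)..ℓ, exp (-(2 * b * |x - y|)) *
        (2 * C - 4 * b * B + 4 * b ^ 2 * A + (4 * b ^ 2 * B - 8 * b * C) * |x - y| +
          4 * b ^ 2 * C * |x - y| ^ 2)) - 2 * (2 * b * A - B) * ℓ| ≤ M := by
  set R : ℝ → ℝ := fun d => exp (-(2 * b * d)) * (A + B * d + C * d ^ 2)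
  set R' : ℝ → ℝ := fun d => exp (-(2 * b * d)) *
    (B - 2 * b * A + (2 * C - 2 * b * B) * d - 2 * b * C * d ^ 2)
  have hexp : ∀ d, HasDerivAt (fun d => exp (-(2 * b * d))) (exp (-(2 * b * d)) * -(2 * b)) d :=
    fun d => by simpa using ((hasDerivAt_id d).const_mul (2 * b)).neg.exp
  have hpoly : ∀ p q r d : ℝ, HasDerivAt (fun d => p + q * d + r * d ^ 2) (q + r * (2 * d)) d :=
    fun p q r d => by
      have h := (((hasDerivAt_id d).const_mul q).const_add p).add
        (((hasDerivAt_id d).pow 2).const_mul r)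
      exact h.congr_deriv (by simp)
  have hR : ∀ d, HasDerivAt R (R' d) d := fun d =>
    ((hexp d).mul (hpoly A B C d)).congr_deriv (by simp only [R']; ring)
  have hR' : ∀ d, HasDerivAt R' (exp (-(2 * b * d)) *
        (2 * C - 4 * b * B + 4 * b ^ 2 * A + (4 * b ^ 2 * B - 8 * b * C) * d +
          4 * b ^ 2 * C * d ^ 2)) d := fun d => by
    have h := (hexp d).mul (hpoly (B - 2 * b * A) (2 * C - 2 * b * B) (-(2 * b * C)) d)
    refine (h.congr_deriv ?_).congr_of_eventuallyEq (Eventually.of_forall fun z => ?_)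
    · ring
    · simp only [R', Pi.mul_apply]; ring
  have hbound : ∀ d, 0 ≤ d → |R d| ≤ |A| + |B| / b + |C| / b ^ 2 := by
    intro d hd
    have h0 : exp (-(b * d)) ≤ 1 := exp_le_one_iff.2 (by nlinarith)
    have h1 : exp (-(b * d)) * d ≤ 1 / b :=
      le_trans (by gcongr; linarith [show 0 < 1 / b by positivity]) (exp_neg_mul_le_inv (d := d) hb)
    have he : exp (-(2 * b * d)) = exp (-(b * d)) * exp (-(b * d)) := by
      rw [← exp_add]; congr 1; ring
    have hpos := exp_pos (-(b * d))
    set E := exp (-(b * d))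
    have hEd : 0 ≤ E * d := by positivity
    have : R d = E * E * A + B * (E * (E * d)) + C * ((E * d) * (E * d)) := by
      simp only [R, he]; ring
    rw [this]
    calc _ ≤ |E * E * A| + |B * (E * (E * d))| + |C * ((E * d) * (E * d))| :=
          abs_add_three _ _ _
      _ = E * E * |A| + |B| * (E * (E * d)) + |C| * ((E * d) * (E * d)) := by
          simp only [abs_mul, abs_of_pos hpos, abs_of_nonneg hd]
      _ ≤ 1 * 1 * |A| + |B| * (1 * (1 / b)) + |C| * ((1 / b) * (1 / b)) := by gcongr
      _ = _ := by field_simp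
  refine ⟨4 * (|A| + |B| / b + |C| / b ^ 2), fun ℓ hℓ => ?_⟩
  rw [integral_integral_comp_abs_sub hR hR' (by fun_prop) hℓ]
  have hR0 : R' 0 = B - 2 * b * A := by simp [R']
  rw [hR0]
  have h1 := abs_le.1 (hbound ℓ hℓ)
  have h2 := abs_le.1 (hbound 0 le_rfl)
  rw [abs_le]
  constructor <;> linarith [h1.1, h1.2, h2.1, h2.2]

lemma exists_abs_normSq_exp_sub_le {b : ℝ} (hb : 0 < b) : ∃ M, ∀ ℓ : ℝ, 0 ≤ ℓ →
    |(∫ x in (0:ℝ)..ℓ, ∫ y in (0:ℝ)..ℓ, exp (-(b * |x - y|)) * exp (-(b * |x - y|))) -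
      1 / b * ℓ| ≤ M := by
  obtain ⟨M, hM⟩ := exists_abs_integral_integral_sub_le hb (1 / (4 * b ^ 2)) 0 0
  refine ⟨M, fun ℓ hℓ => ?_⟩
  convert hM ℓ hℓ using 3
  · refine intervalIntegral.integral_congr fun x _ => intervalIntegral.integral_congr fun y _ => ?_
    rw [← exp_add]
    field_simp
    ring_nf
  · field_simp
    ring

lemma exists_abs_ip_expContr_sub_le {b : ℝ} (hb : 0 < b) : ∃ M, ∀ ℓ : ℝ, 0 ≤ ℓ →
    |(∫ x in (0:ℝ)..ℓ, ∫ y in (0:ℝ)..ℓ, expContr b ℓ x y * exp (-(b * |x - y|))) -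
      3 / (2 * b ^ 2) * ℓ| ≤ M := by
  obtain ⟨M, hM⟩ := exists_abs_integral_integral_sub_le hb (1 / (2 * b ^ 3)) (1 / (4 * b ^ 2)) 0
  refine ⟨M + 1 * (1 / b ^ 3), fun ℓ hℓ => ?_⟩
  have hmain := hM ℓ hℓ
  have hcorr := abs_integral_integral_sub_le (K := 1) hb hℓ zero_le_one
    (F := fun x y => (exp (-(b * |x - y|)) * (1 / b + |x - y|) - expCorr b ℓ x y) *
      exp (-(b * |x - y|)))
    (G := fun x y => exp (-(2 * b * |x - y|)) * (2 * 0 - 4 * b * (1 / (4 * b ^ 2)) +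
      4 * b ^ 2 * (1 / (2 * b ^ 3)) + (4 * b ^ 2 * (1 / (4 * b ^ 2)) - 8 * b * 0) * |x - y| +
          4 * b ^ 2 * 0 * |x - y| ^ 2))
    (by unfold expCorr Function.uncurry; fun_prop) (by unfold Function.uncurry; fun_prop) ?_
  · have hcongr : ∫ x in (0:ℝ)..ℓ, ∫ y in (0:ℝ)..ℓ, expContr b ℓ x y * exp (-(b * |x - y|)) =
        ∫ x in (0:ℝ)..ℓ, ∫ y in (0:ℝ)..ℓ,
          (exp (-(b * |x - y|)) * (1 / b + |x - y|) - expCorr b ℓ x y) * exp (-(b * |x - y|)) := by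
      refine intervalIntegral.integral_congr fun x hx =>
        intervalIntegral.integral_congr fun y hy => ?_
      rw [Set.uIcc_of_le hℓ] at hx hy
      rw [expContr_eq hb hx hy]
    have hκ : 2 * (2 * b * (1 / (2 * b ^ 3)) - 1 / (4 * b ^ 2)) = 3 / (2 * b ^ 2) := by
      field_simp
      ring
    rw [hκ] at hmain
    rw [hcongr, add_comm]
    exact (abs_sub_le _ _ _).trans (add_le_add hcorr hmain)
  · intro x _ y _
    have he : exp (-(2 * b * |x - y|)) = exp (-(b * |x - y|)) * exp (-(b * |x - y|)) := by
      rw [← exp_add]; congr 1; ring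
    have h1 : exp (-(b * |x - y|)) ≤ 1 := exp_le_one_iff.2 (by
      have := abs_nonneg (x - y)
      nlinarith [mul_nonneg hb.le this])
    have hE := expCorr_nonneg hb ℓ x y
    rw [he]
    have : (exp (-(b * |x - y|)) * (1 / b + |x - y|) - expCorr b ℓ x y) * exp (-(b * |x - y|)) -
        exp (-(b * |x - y|)) * exp (-(b * |x - y|)) * (2 * 0 - 4 * b * (1 / (4 * b ^ 2)) +
      4 * b ^ 2 * (1 / (2 * b ^ 3)) + (4 * b ^ 2 * (1 / (4 * b ^ 2)) - 8 * b * 0) * |x - y| +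
          4 * b ^ 2 * 0 * |x - y| ^ 2) = -(exp (-(b * |x - y|)) * expCorr b ℓ x y) := by
      field_simp
      ring
    rw [this, abs_neg, abs_of_nonneg (by positivity)]
    gcongr

lemma exists_abs_normSq_expContr_sub_le {b : ℝ} (hb : 0 < b) : ∃ M, ∀ ℓ : ℝ, 0 ≤ ℓ →
    |(∫ x in (0:ℝ)..ℓ, ∫ y in (0:ℝ)..ℓ, expContr b ℓ x y * expContr b ℓ x y) -
      5 / (2 * b ^ 3) * ℓ| ≤ M := by
  obtain ⟨M, hM⟩ := exists_abs_integral_integral_sub_le hb (9 / (8 * b ^ 4)) (1 / b ^ 3)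
    (1 / (4 * b ^ 2))
  refine ⟨M + 2 / b * (1 / b ^ 3), fun ℓ hℓ => ?_⟩
  have hmain := hM ℓ hℓ
  have hcorr := abs_integral_integral_sub_le (K := 2 / b) hb hℓ (by positivity)
    (F := fun x y => (exp (-(b * |x - y|)) * (1 / b + |x - y|) - expCorr b ℓ x y) *
      (exp (-(b * |x - y|)) * (1 / b + |x - y|) - expCorr b ℓ x y))
    (G := fun x y => exp (-(2 * b * |x - y|)) * (2 * (1 / (4 * b ^ 2)) - 4 * b * (1 / b ^ 3) +
      4 * b ^ 2 * (9 / (8 * b ^ 4)) +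
        (4 * b ^ 2 * (1 / b ^ 3) - 8 * b * (1 / (4 * b ^ 2))) * |x - y| +
          4 * b ^ 2 * (1 / (4 * b ^ 2)) * |x - y| ^ 2))
    (by unfold expCorr Function.uncurry; fun_prop) (by unfold Function.uncurry; fun_prop) ?_
  · have hcongr : ∫ x in (0:ℝ)..ℓ, ∫ y in (0:ℝ)..ℓ, expContr b ℓ x y * expContr b ℓ x y =
        ∫ x in (0:ℝ)..ℓ, ∫ y in (0:ℝ)..ℓ,
          (exp (-(b * |x - y|)) * (1 / b + |x - y|) - expCorr b ℓ x y) *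
            (exp (-(b * |x - y|)) * (1 / b + |x - y|) - expCorr b ℓ x y) := by
      refine intervalIntegral.integral_congr fun x hx =>
        intervalIntegral.integral_congr fun y hy => ?_
      rw [Set.uIcc_of_le hℓ] at hx hy
      rw [expContr_eq hb hx hy]
    have hκ : 2 * (2 * b * (9 / (8 * b ^ 4)) - 1 / b ^ 3) = 5 / (2 * b ^ 3) := by
      field_simp
      ring
    rw [hκ] at hmain
    rw [hcongr, add_comm]
    exact (abs_sub_le _ _ _).trans (add_le_add hcorr hmain)
  · intro x hx y hy
    have he : exp (-(2 * b * |x - y|)) = exp (-(b * |x - y|)) * exp (-(b * |x - y|)) := by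
      rw [← exp_add]; congr 1; ring
    have hE := expCorr_nonneg hb ℓ x y
    have hH := expContr_nonneg (b := b) hℓ x y
    rw [expContr_eq hb hx hy] at hH
    have hle := exp_neg_mul_le_inv (d := |x - y|) hb
    have hG : exp (-(2 * b * |x - y|)) * (2 * (1 / (4 * b ^ 2)) - 4 * b * (1 / b ^ 3) +
      4 * b ^ 2 * (9 / (8 * b ^ 4)) +
        (4 * b ^ 2 * (1 / b ^ 3) - 8 * b * (1 / (4 * b ^ 2))) * |x - y| +
          4 * b ^ 2 * (1 / (4 * b ^ 2)) * |x - y| ^ 2) =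
        (exp (-(b * |x - y|)) * (1 / b + |x - y|)) * (exp (-(b * |x - y|)) * (1 / b + |x - y|)) := by
      rw [he]
      field_simp
      ring
    rw [hG]
    set m := exp (-(b * |x - y|)) * (1 / b + |x - y|)
    set e := expCorr b ℓ x y
    have h2 : (2:ℝ) / b = 1 / b + 1 / b := by ring
    rw [show (m - e) * (m - e) - m * m = -((m + (m - e)) * e) by ring, abs_neg,
      abs_of_nonneg (mul_nonneg (by linarith) hE), h2]
    gcongr
    linarith

lemma tendsto_div_of_abs_sub_le {F : ℝ → ℝ} {κ M : ℝ}
    (h : ∀ ℓ : ℝ, 0 ≤ ℓ → |F ℓ - κ * ℓ| ≤ M) : Tendsto (fun ℓ => F ℓ / ℓ) atTop (𝓝 κ) := by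
  rw [tendsto_iff_norm_sub_tendsto_zero]
  refine squeeze_zero' (g := fun ℓ => M / ℓ) (Eventually.of_forall fun _ => norm_nonneg _) ?_
    (tendsto_const_nhds.div_atTop tendsto_id)
  filter_upwards [eventually_gt_atTop 0] with ℓ hℓ
  rw [Real.norm_eq_abs, show F ℓ / ℓ - κ = (F ℓ - κ * ℓ) / ℓ by field_simp, abs_div,
    abs_of_pos hℓ]
  gcongr
  exact h ℓ hℓ.le

/-- In logarithmic coordinates the three quantities attached to `f_t` are those of the Toeplitz
kernel `e^{-(α-1/2)|x-y|}`, up to powers of the normalising constant. -/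
lemma fker_quantities {T α t : ℝ} (ht0 : 0 ≤ t) (htT : t < T) :
    normSq T (fker T α t) = (1 / (2 * √(lam T α t))) ^ 2 *
      ∫ x in (0:ℝ)..Real.log (T / (T - t)), ∫ y in (0:ℝ)..Real.log (T / (T - t)),
        exp (-((α - 1 / 2) * |x - y|)) * exp (-((α - 1 / 2) * |x - y|)) ∧
    ip T (contr T (fker T α t) (fker T α t)) (fker T α t) = (1 / (2 * √(lam T α t))) ^ 3 *
      ∫ x in (0:ℝ)..Real.log (T / (T - t)), ∫ y in (0:ℝ)..Real.log (T / (T - t)),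
        expContr (α - 1 / 2) (Real.log (T / (T - t))) x y * exp (-((α - 1 / 2) * |x - y|)) ∧
    normSq T (contr T (fker T α t) (fker T α t)) = (1 / (2 * √(lam T α t))) ^ 4 *
      ∫ x in (0:ℝ)..Real.log (T / (T - t)), ∫ y in (0:ℝ)..Real.log (T / (T - t)),
        expContr (α - 1 / 2) (Real.log (T / (T - t))) x y *
          expContr (α - 1 / 2) (Real.log (T / (T - t))) x y := by
  have hsupp : ∀ u v, ¬ (u ∈ Set.Icc 0 t ∧ v ∈ Set.Icc 0 t) → fker T α t u v = 0 :=
    fun u v h => if_neg h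
  have hsupp' : ∀ u v, ¬ (u ∈ Set.Icc 0 t ∧ v ∈ Set.Icc 0 t) →
      contr T (fker T α t) (fker T α t) u v = 0 := by
    intro u v h
    have hz : ∀ w, fker T α t u w * fker T α t v w = 0 := fun w => by
      by_cases hu : u ∈ Set.Icc 0 t
      · rw [hsupp v w (fun hv => h ⟨hu, hv.1⟩), mul_zero]
      · rw [hsupp u w (fun hu' => hu hu'.1), zero_mul]
    simp [contr, hz]
  have hf : ∀ x ∈ Set.Icc 0 (Real.log (T / (T - t))), ∀ y ∈ Set.Icc 0 (Real.log (T / (T - t))),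
      fker T α t (T - T * exp (-x)) (T - T * exp (-y)) = T⁻¹ * exp (x / 2) * exp (y / 2) *
        (1 / (2 * √(lam T α t)) * exp (-((α - 1 / 2) * |x - y|))) := fun x hx y hy => by
    rw [fker_log_coord ht0 htT hx hy]
    ring
  have hc := fun x (hx : x ∈ Set.Icc 0 (Real.log (T / (T - t)))) y
    (hy : y ∈ Set.Icc 0 (Real.log (T / (T - t)))) =>
      contr_fker_log_coord (α := α) ht0 htT hx hy
  refine ⟨?_, ?_, ?_⟩
  · rw [normSq, ip_eq_of_log_coord ht0 htT hsupp hf hf]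
    simp only [← intervalIntegral.integral_const_mul]
    congr! 4
    ring
  · rw [ip_eq_of_log_coord ht0 htT hsupp hc hf]
    simp only [← intervalIntegral.integral_const_mul]
    congr! 4
    ring
  · rw [normSq, ip_eq_of_log_coord ht0 htT hsupp' hc hc]
    simp only [← intervalIntegral.integral_const_mul]
    congr! 4
    ring

theorem stmt_18 (T α : ℝ) (hT : 0 < T) (hα : 1 / 2 < α) :
    Tendsto (fun t => Real.sqrt (normSq T (contr T (fker T α t) (fker T α t))) /
        ip T (contr T (fker T α t) (fker T α t)) (fker T α t))
      (𝓝[<] T) (𝓝 (2 * Real.sqrt 5 / 3))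
    ∧
    Tendsto (fun t => (2 * normSq T (fker T α t) - 1) /
        ip T (contr T (fker T α t) (fker T α t)) (fker T α t))
      (𝓝[<] T) (𝓝 0) := by
  obtain ⟨b, hb⟩ : ∃ b, b = α - 1 / 2 := ⟨_, rfl⟩
  have hb0 : 0 < b := by linarith
  obtain ⟨M₂, hM₂⟩ := exists_abs_normSq_exp_sub_le hb0
  obtain ⟨M₃, hM₃⟩ := exists_abs_ip_expContr_sub_le hb0
  obtain ⟨M₄, hM₄⟩ := exists_abs_normSq_expContr_sub_le hb0
  have hquant := fun t (ht0 : 0 ≤ t) (htT : t < T) => fker_quantities (α := α) ht0 htT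
  simp only [← hb] at hquant
  set Q₂ : ℝ → ℝ := fun ℓ => ∫ x in (0:ℝ)..ℓ, ∫ y in (0:ℝ)..ℓ,
    exp (-(b * |x - y|)) * exp (-(b * |x - y|)) with hQ₂
  set Q₃ : ℝ → ℝ := fun ℓ => ∫ x in (0:ℝ)..ℓ, ∫ y in (0:ℝ)..ℓ,
    expContr b ℓ x y * exp (-(b * |x - y|)) with hQ₃
  set Q₄ : ℝ → ℝ := fun ℓ => ∫ x in (0:ℝ)..ℓ, ∫ y in (0:ℝ)..ℓ,
    expContr b ℓ x y * expContr b ℓ x y with hQ₄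
  replace hM₂ : ∀ ℓ : ℝ, 0 ≤ ℓ → |Q₂ ℓ - 1 / b * ℓ| ≤ M₂ := hM₂
  replace hM₃ : ∀ ℓ : ℝ, 0 ≤ ℓ → |Q₃ ℓ - 3 / (2 * b ^ 2) * ℓ| ≤ M₃ := hM₃
  replace hM₄ : ∀ ℓ : ℝ, 0 ≤ ℓ → |Q₄ ℓ - 5 / (2 * b ^ 3) * ℓ| ≤ M₄ := hM₄
  set c : ℝ → ℝ := fun t => 1 / (2 * √(lam T α t)) with hc
  set ℓ : ℝ → ℝ := fun t => Real.log (T / (T - t)) with hℓ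
  replace hquant : ∀ t, 0 ≤ t → t < T → normSq T (fker T α t) = c t ^ 2 * Q₂ (ℓ t) ∧
      ip T (contr T (fker T α t) (fker T α t)) (fker T α t) = c t ^ 3 * Q₃ (ℓ t) ∧
      normSq T (contr T (fker T α t) (fker T α t)) = c t ^ 4 * Q₄ (ℓ t) := hquant
  clear_value Q₂ Q₃ Q₄
  have hsub : Tendsto (fun t => T - t) (𝓝[<] T) (𝓝[>] 0) := by
    refine tendsto_nhdsWithin_iff.2 ⟨?_, ?_⟩
    · have : Tendsto (fun t => T - t) (𝓝 T) (𝓝 (T - T)) :=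
        (continuous_const.sub continuous_id).tendsto T
      rw [sub_self] at this
      exact this.mono_left nhdsWithin_le_nhds
    · filter_upwards [self_mem_nhdsWithin] with t ht
      exact sub_pos.2 (Set.mem_Iio.1 ht)
  have hlog : Tendsto (fun t => -Real.log (T - t)) (𝓝[<] T) atTop :=
    tendsto_neg_atBot_atTop.comp (tendsto_log_nhdsGT_zero.comp hsub)
  have hnear : ∀ᶠ t in 𝓝[<] T, 0 ≤ t ∧ t < T ∧ 0 < -Real.log (T - t) ∧ 0 < ℓ t ∧
      ℓ t = -Real.log (T - t) + Real.log T := by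
    filter_upwards [self_mem_nhdsWithin, nhdsWithin_le_nhds (lt_mem_nhds hT),
      hlog.eventually_gt_atTop 0] with t htT ht0 hL
    have hε : 0 < T - t := sub_pos.2 htT
    refine ⟨ht0.le, htT, hL, Real.log_pos ((one_lt_div hε).2 (by linarith)), ?_⟩
    simp only [hℓ]
    rw [Real.log_div hT.ne' hε.ne']
    ring
  have hℓtop : Tendsto ℓ (𝓝[<] T) atTop :=
    (tendsto_atTop_add_const_right _ (Real.log T) hlog).congr'
      (hnear.mono fun t ht => ht.2.2.2.2.symm)
  have hcpos : ∀ᶠ t in 𝓝[<] T, 0 < c t ∧ c t ^ 2 = b / (2 * -Real.log (T - t)) := by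
    filter_upwards [hnear] with t ⟨_, _, hL, _, _⟩
    have hlam : lam T α t = -Real.log (T - t) / (2 * b) := by
      rw [lam, abs_of_neg (by linarith), hb]
      congr 1
      ring
    have hlam0 : 0 < lam T α t := by rw [hlam]; positivity
    refine ⟨by simp only [hc]; positivity, ?_⟩
    simp only [hc]
    rw [div_pow, mul_pow, sq_sqrt hlam0.le, hlam]
    have := hL.ne'
    field_simp
  have hc2ℓ : Tendsto (fun t => c t ^ 2 * ℓ t) (𝓝[<] T) (𝓝 (b / 2)) := by
    have h1 : Tendsto (fun t => b / 2 * (1 + Real.log T / -Real.log (T - t))) (𝓝[<] T)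
        (𝓝 (b / 2 * (1 + 0))) :=
      ((tendsto_const_nhds.div_atTop hlog).const_add 1).const_mul _
    rw [add_zero, mul_one] at h1
    refine h1.congr' ?_
    filter_upwards [hnear, hcpos] with t ⟨_, _, hL, _, h⟩ ⟨_, h2⟩
    rw [h2, h]
    have := hL.ne'
    generalize -Real.log (T - t) = L at *
    field_simp
  have hsq : Tendsto (fun t => √(c t ^ 2 * ℓ t)) (𝓝[<] T) (𝓝 √(b / 2)) := hc2ℓ.sqrt
  have hQ₃ℓ : Tendsto (fun t => Q₃ (ℓ t) / ℓ t) (𝓝[<] T) (𝓝 (3 / (2 * b ^ 2))) :=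
    (tendsto_div_of_abs_sub_le hM₃).comp hℓtop
  have hQ₄ℓ : Tendsto (fun t => Q₄ (ℓ t) / ℓ t) (𝓝[<] T) (𝓝 (5 / (2 * b ^ 3))) :=
    (tendsto_div_of_abs_sub_le hM₄).comp hℓtop
  have hden : Tendsto (fun t => Q₃ (ℓ t) / ℓ t * √(c t ^ 2 * ℓ t)) (𝓝[<] T)
      (𝓝 (3 / (2 * b ^ 2) * √(b / 2))) := hQ₃ℓ.mul hsq
  have hden0 : 0 < 3 / (2 * b ^ 2) * √(b / 2) := by positivity
  have hcQ₃ : Tendsto (fun t => c t * Q₃ (ℓ t)) (𝓝[<] T) atTop := by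
    refine (hden.pos_mul_atTop hden0 (tendsto_sqrt_atTop.comp hℓtop)).congr' ?_
    filter_upwards [hnear, hcpos] with t ⟨_, _, _, hpos, _⟩ ⟨hc0, _⟩
    simp only [Function.comp]
    rw [sqrt_mul (sq_nonneg _), sqrt_sq hc0.le]
    have hs := mul_self_sqrt hpos.le
    have := hpos.ne'
    field_simp
    linear_combination Q₃ (ℓ t) * hs
  constructor
  · have hlim : 2 * √5 / 3 = √(5 / (2 * b ^ 3)) / (3 / (2 * b ^ 2) * √(b / 2)) := by
      have h5 : 5 / (2 * b ^ 3) = 5 * (b / 2) / (b ^ 2) ^ 2 := by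
        field_simp
      rw [h5, sqrt_div' _ (by positivity), sqrt_sq (by positivity), sqrt_mul (by norm_num)]
      have : 0 < √(b / 2) := by positivity
      field_simp
    rw [hlim]
    refine (hQ₄ℓ.sqrt.div hden hden0.ne').congr' ?_
    filter_upwards [hnear, hcpos, hcQ₃.eventually_gt_atTop 0] with
      t ⟨ht0, htT, _, hpos, _⟩ ⟨hc0, _⟩ hQpos
    have hQ0 : Q₃ (ℓ t) ≠ 0 := fun h => by simp [h] at hQpos
    obtain ⟨-, h3, h4⟩ := hquant t ht0 htT
    simp only [Pi.div_apply]
    rw [h3, h4, sqrt_div' _ hpos.le, show c t ^ 4 = (c t ^ 2) ^ 2 by ring,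
      sqrt_mul (sq_nonneg _), sqrt_mul (sq_nonneg _), sqrt_sq hc0.le, sqrt_sq (sq_nonneg _)]
    have hs := mul_self_sqrt hpos.le
    have hs0 := (sqrt_pos.2 hpos).ne'
    have := hpos.ne'
    have := hc0.ne'
    field_simp
    linear_combination (-√(Q₄ (ℓ t))) * hs
  · refine squeeze_zero_norm' (a := fun t => (b * M₂ + |Real.log T|) * (2 / b) / (c t * Q₃ (ℓ t)))
      ?_ (tendsto_const_nhds.div_atTop hcQ₃)
    filter_upwards [hnear, hcpos, hcQ₃.eventually_gt_atTop 0] with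
      t ⟨ht0, htT, hL, hpos, hℓL⟩ ⟨hc0, hc2⟩ hQpos
    obtain ⟨h2, h3, -⟩ := hquant t ht0 htT
    have hQ0 : Q₃ (ℓ t) ≠ 0 := fun h => by simp [h] at hQpos
    have hratio : (2 * (c t ^ 2 * Q₂ (ℓ t)) - 1) / (c t ^ 3 * Q₃ (ℓ t)) =
        (b * (Q₂ (ℓ t) - 1 / b * ℓ t) + Real.log T) * (2 / b) / (c t * Q₃ (ℓ t)) := by
      have hcL : 2 * c t ^ 2 * -Real.log (T - t) = b := by
        rw [hc2]
        have := hL.ne'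
        generalize -Real.log (T - t) = L at *
        field_simp
      have hT' : Real.log T = ℓ t - -Real.log (T - t) := by rw [hℓL]; ring
      rw [hT']
      have := hc0.ne'
      field_simp
      linear_combination hcL
    rw [h2, h3, hratio, Real.norm_eq_abs, abs_div, abs_of_pos hQpos, abs_mul,
      abs_of_pos (show 0 < 2 / b by positivity)]
    gcongr
    refine (abs_add_le _ _).trans ?_
    rw [abs_mul, abs_of_pos hb0]
    gcongr
    exact hM₂ _ hpos.le
end
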